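/- Let S be a standard graded ring over a field k of characteristic p > 0 and M a finitely generated graded S-module such that dim(Sing(S) ∩ Supp(M)) ≤ 1. Then reg(F^e M) ≤ reg(S) + max over 0 ≤ i ≤ dim S of (p^e · b_i^S(M) − i), where F^e denotes the e-th iterated Frobenius functor and b_i^S(M) the maximal degree of a minimal i-th syzygy of M over S. -/

import Mathlib

/-!
The proof is dimension shifting along the Frobenius power of the resolution. Write `q = p ^ e`,
let `G_i` be the graded free module `F_i` with its degrees multiplied by `q`, let
`D_i : G_{i+1} → G_i` be the differential with all entries raised to the power `q`, and put
`C_i = coker D_i`, so that `C_0` is the Frobenius power of `M`. There are short exact sequences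
`0 → im D_i → G_i → C_i → 0` and `0 → H_{i+1} → C_{i+1} → im D_i → 0`, where `H_{i+1}` is the
homology of `G` at `G_{i+1}`. If `H_{i+1}` is supported in dimension at most one, its local
cohomology vanishes in degrees at least two, and a nonzero class in `H^c(C_i)_j` yields one in
`H^c(G_i)_j` or in `H^{c+1}(C_{i+1})_j` (`lcNZ_step`). As local cohomology vanishes above `dim S`,
this ends with some `H^{c+i}(G_i)_j ≠ 0` and `c + i ≤ dim S` (`exists_lcNZ_free`). Since `G_i` is
a sum of copies of `S(-q · deg i a)`, this is the required bound.

The support of `H_{i+1}` lies in `Sing S ∩ Supp M` (`exists_smul_mem`). Off `Supp M` the resolution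
is locally null-homotopic, and so is its Frobenius power. Where `S_P` is regular, the Frobenius
endomorphism is flat (`frobenius_flat`) and hence preserves exactness.

Two classical theorems are proved along the way. Grothendieck vanishing (`KV.of_dim`) is obtained
for the colimit of Koszul cohomologies by prime filtration and induction on dimension. Flatness of
Frobenius on a regular local ring follows from a criterion of local type (`flat_of_regular`): if a
regular sequence generating the maximal ideal of `R` stays regular on `A`, then `Tor₁` vanishes on
the residue field and, by Nakayama and Noetherian induction, on all finitely generated modules.
Here `Tor₁`-vanishing is phrased as preservation of short exact sequences by `A ⊗ -` (`TorVan`).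
-/

open Finset

section PaperRegularity

/-! ## Graded rings, graded modules, and a concrete (Koszul/Čech) model of graded local
cohomology, used to express the invariants `a_i(M)` and `reg(M)` of Castelnuovo–Mumford
regularity theory. -/

/-- Degrees, with `−∞` (for vanishing modules) and `+∞`. -/
abbrev Deg : Type := WithBot (WithTop ℤ)

/-- The canonical inclusion of `ℤ` into `Deg`. -/
def Deg.of (j : ℤ) : Deg := ((j : WithTop ℤ) : Deg)

variable {S : Type} [CommRing S]

/-- `𝒜` is a (ℤ-indexed, nonnegatively supported) standard grading on the ring `S`:
`S = ⊕ 𝒜_i`, `1 ∈ 𝒜_0`, `𝒜_i · 𝒜_j ⊆ 𝒜_{i+j}`, `𝒜_i = 0` for `i < 0`, and `S` is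
generated in degree one: `𝒜_{i+1} = 𝒜_1 · 𝒜_i`. -/
structure IsStdGraded (𝒜 : ℤ → AddSubgroup S) : Prop where
  internal : DirectSum.IsInternal 𝒜
  one_mem : (1 : S) ∈ 𝒜 0
  mul_mem : ∀ {i j : ℤ} {a b : S}, a ∈ 𝒜 i → b ∈ 𝒜 j → a * b ∈ 𝒜 (i + j)
  bot_of_neg : ∀ i < (0 : ℤ), 𝒜 i = ⊥
  gen_one : ∀ i : ℤ, 0 ≤ i → ∀ a ∈ 𝒜 (i + 1),
    a ∈ AddSubgroup.closure {y : S | ∃ s ∈ 𝒜 1, ∃ b ∈ 𝒜 i, y = s * b}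

/-- `S` is a standard graded ring *over* `R₀` (via the algebra structure):
the degree-zero part is exactly the image of `R₀`. -/
def GradedOver (𝒜 : ℤ → AddSubgroup S) (R₀ : Type) [CommRing R₀] [Algebra R₀ S] : Prop :=
  Function.Injective (algebraMap R₀ S) ∧ (𝒜 0 : Set S) = Set.range (algebraMap R₀ S)

/-- `ℳ` is a grading on the `S`-module `M`, compatible with the grading `𝒜` of `S`. -/
structure IsGradedMod (𝒜 : ℤ → AddSubgroup S) {M : Type} [AddCommGroup M] [Module S M]
    (ℳ : ℤ → AddSubgroup M) : Prop where
  internal : DirectSum.IsInternal ℳ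
  smul_mem : ∀ {i j : ℤ} {s : S} {m : M}, s ∈ 𝒜 i → m ∈ ℳ j → s • m ∈ ℳ (i + j)

/-- `x : Fin n → S` is a family of degree-one elements generating `𝒜 1` (hence generating
the irrelevant ideal `S₊` up to radical). -/
def GensDegOne (𝒜 : ℤ → AddSubgroup S) {n : ℕ} (x : Fin n → S) : Prop :=
  (∀ i, x i ∈ 𝒜 1) ∧
    ∀ s ∈ 𝒜 1, s ∈ AddSubgroup.closure {y : S | ∃ r ∈ 𝒜 0, ∃ i, y = r * x i}

/-- The irrelevant ideal `S₊ = ⊕_{i>0} 𝒜_i` of a graded ring. -/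
def sPlus (𝒜 : ℤ → AddSubgroup S) : Ideal S :=
  Ideal.span {s : S | ∃ i : ℤ, 0 < i ∧ s ∈ 𝒜 i}

/-- The induced grading on a quotient module `M ⧸ P` (images of the graded pieces). -/
def qmPiece {M : Type} [AddCommGroup M] [Module S M] (P : Submodule S M)
    (ℳ : ℤ → AddSubgroup M) (j : ℤ) : AddSubgroup (M ⧸ P) :=
  AddSubgroup.map (P.mkQ).toAddMonoidHom (ℳ j)

section Koszul

variable {M : Type} [AddCommGroup M] [Module S M] {n : ℕ}

/-- Cochains of the (exponent `t`) Koszul cocomplex on `x_1^t, …, x_n^t` with values in `M`. -/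
abbrev KCochain (M : Type) (n i : ℕ) : Type := {T : Finset (Fin n) // T.card = i} → M

/-- The Koszul codifferential (for the sequence `x_1^t, …, x_n^t`). -/
noncomputable def kd (x : Fin n → S) (t i : ℕ) (z : KCochain M n i) : KCochain M n (i + 1) :=
  fun T => ∑ s ∈ T.1.attach,
    ((-1 : ℤ) ^ ((T.1.filter (fun a => a < s.1)).card)) •
      ((x s.1 ^ t) • z ⟨T.1.erase s.1, by
        rw [Finset.card_erase_of_mem s.2, T.2]; rfl⟩)

/-- The transition map from the exponent `t` Koszul cocomplex to the exponent `t + u` one. -/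
noncomputable def kpush (x : Fin n → S) (u i : ℕ) (z : KCochain M n i) : KCochain M n i :=
  fun T => (∏ s ∈ T.1, x s ^ u) • z T

/-- `z` is a coboundary in the exponent `t` Koszul cocomplex. -/
def kIsCobound (x : Fin n → S) (t : ℕ) : ∀ i, KCochain M n i → Prop
  | 0, z => z = 0
  | i + 1, z => ∃ w : KCochain M n i, kd x t i w = z

/-- `z` lies in the internal degree `j` strand of the exponent `t` Koszul cocomplex
(in cohomological degree `i`), for the grading `ℳ` of `M`. -/
def kStrand (ℳ : ℤ → AddSubgroup M) (t i : ℕ) (j : ℤ) (z : KCochain M n i) : Prop :=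
  ∀ T, z T ∈ ℳ (j + (t * i : ℕ))

/-- Nonvanishing of the degree `j` part of the `i`-th graded local cohomology module
`H^i_{S₊}(M)_j`, computed as the direct limit over `t` of the Koszul cohomologies of
`x_1^t, …, x_n^t`: there is a degree `j` cocycle whose class survives in the colimit. -/
def lcNZ (x : Fin n → S) (ℳ : ℤ → AddSubgroup M) (i : ℕ) (j : ℤ) : Prop :=
  ∃ (t : ℕ) (z : KCochain M n i), kStrand ℳ t i j z ∧ kd x t i z = 0 ∧
    ∀ u : ℕ, ¬ kIsCobound x (t + u) i (kpush x u i z)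

/-- `a_i(M)`: the top degree of the `i`-th local cohomology of `M` (`⊥` if it vanishes). -/
noncomputable def aVal (x : Fin n → S) (ℳ : ℤ → AddSubgroup M) (i : ℕ) : Deg :=
  sSup {d : Deg | ∃ j : ℤ, lcNZ x ℳ i j ∧ d = Deg.of j}

/-- The Castelnuovo–Mumford regularity `reg M = max_i (a_i(M) + i)`. -/
noncomputable def regVal (x : Fin n → S) (ℳ : ℤ → AddSubgroup M) : Deg :=
  sSup {d : Deg | ∃ (i : ℕ) (j : ℤ), lcNZ x ℳ i j ∧ d = Deg.of (j + i)}

end Koszul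

/-- A (bounded-below, homologically indexed) complex of finitely generated graded free
`S`-modules `F_i = ⊕_{a : Fin (r i)} S(-deg i a)`, recorded via its matrices: the entry
`mat i a b ∈ S` is the coefficient of the `b`-th basis vector of `F_i` in the image of the
`a`-th basis vector of `F_{i+1}`; entries are homogeneous of the appropriate degrees. -/
structure GFC (𝒜 : ℤ → AddSubgroup S) where
  r : ℕ → ℕ
  deg : ∀ i, Fin (r i) → ℤ
  mat : ∀ i, Fin (r (i + 1)) → Fin (r i) → S
  mat_mem : ∀ i a b, mat i a b ∈ 𝒜 (deg (i + 1) a - deg i b)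
  comp_eq_zero : ∀ i (a : Fin (r (i + 2))) (c : Fin (r i)),
    ∑ b, mat i b c * mat (i + 1) a b = 0

/-- A minimal graded free resolution of the graded `S`-module `M` (with grading `ℳ`):
a graded free complex `F_•` together with an augmentation `F_0 → M` which is surjective,
exact, and minimal (all entries of the differentials lie in the maximal graded ideal;
`m0` is the set of degree-zero elements lying in the maximal ideal of `S_0`). -/
structure MGFR (𝒜 : ℤ → AddSubgroup S) {M : Type} [AddCommGroup M] [Module S M]
    (ℳ : ℤ → AddSubgroup M) (m0 : Set S) extends GFC 𝒜 where
  augm : Fin (r 0) → M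
  augm_mem : ∀ a, augm a ∈ ℳ (deg 0 a)
  augm_surj : ∀ m : M, ∃ z : Fin (r 0) → S, ∑ a, z a • augm a = m
  exact_zero : ∀ z : Fin (r 0) → S, (∑ a, z a • augm a = 0) ↔
    ∃ w : Fin (r 1) → S, (fun b => ∑ a, mat 0 a b * w a) = z
  exact_succ : ∀ i (z : Fin (r (i + 1)) → S),
    ((fun b => ∑ a, mat i a b * z a) = (0 : Fin (r i) → S)) ↔
      ∃ w : Fin (r (i + 2)) → S, (fun c => ∑ a, mat (i + 1) a c * w a) = z
  minimal : ∀ i a b, deg (i + 1) a = deg i b → mat i a b ∈ m0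

namespace GFC

variable {𝒜 : ℤ → AddSubgroup S} (F : GFC 𝒜)
variable (N : Type) [AddCommGroup N] [Module S N]

/-- The complex `F_• ⊗_S N`, in homological degree `i`. -/
noncomputable def tmap (i : ℕ) : ((Fin (F.r (i + 1)) → N) →ₗ[S] (Fin (F.r i) → N)) where
  toFun z := fun b => ∑ a, F.mat i a b • z a
  map_add' y z := by
    funext b
    simp only [Pi.add_apply, smul_add]
    exact Finset.sum_add_distrib
  map_smul' s z := by
    funext b
    simp only [Pi.smul_apply, RingHom.id_apply]
    rw [Finset.smul_sum]
    exact Finset.sum_congr rfl fun a _ => smul_comm (F.mat i a b) s (z a)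

/-- Cycles of the complex `F_• ⊗_S N`. -/
noncomputable def cyc : ∀ i : ℕ, Submodule S (Fin (F.r i) → N)
  | 0 => ⊤
  | i + 1 => LinearMap.ker (F.tmap N i)

/-- Boundaries of the complex `F_• ⊗_S N`. -/
noncomputable def bdry (i : ℕ) : Submodule S (Fin (F.r i) → N) :=
  LinearMap.range (F.tmap N i)

/-- The homology `H_i(F_• ⊗_S N)` (e.g. `Tor_i^S(M, N)` when `F` is a resolution of `M`). -/
noncomputable def H (i : ℕ) : Type :=
  (F.cyc N i) ⧸ (Submodule.comap (F.cyc N i).subtype (F.bdry N i))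

noncomputable instance (i : ℕ) : AddCommGroup (F.H N i) :=
  inferInstanceAs (AddCommGroup ((F.cyc N i) ⧸ (Submodule.comap (F.cyc N i).subtype (F.bdry N i))))

noncomputable instance (i : ℕ) : Module S (F.H N i) :=
  inferInstanceAs (Module S ((F.cyc N i) ⧸ (Submodule.comap (F.cyc N i).subtype (F.bdry N i))))

/-- The internal degree `j` part of `F_i ⊗_S N`, for a grading `𝒩` of `N`. -/
def fpiece (𝒩 : ℤ → AddSubgroup N) (i : ℕ) (j : ℤ) : AddSubgroup (Fin (F.r i) → N) :=
  AddSubgroup.pi Set.univ (fun a => 𝒩 (j - F.deg i a))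

/-- The induced grading on the homology `H_i(F_• ⊗_S N)`. -/
noncomputable def Hpiece (𝒩 : ℤ → AddSubgroup N) (i : ℕ) (j : ℤ) : AddSubgroup (F.H N i) :=
  AddSubgroup.map
    ((Submodule.mkQ (Submodule.comap (F.cyc N i).subtype (F.bdry N i))).toAddMonoidHom)
    (AddSubgroup.comap ((F.cyc N i).subtype).toAddMonoidHom (F.fpiece N 𝒩 i j))

/-- Nonvanishing of the degree `j` part of `H_i(F_• ⊗_S N)` (e.g. of `Tor_i^S(M, N)_j`). -/
noncomputable def HNZ (𝒩 : ℤ → AddSubgroup N) (i : ℕ) (j : ℤ) : Prop :=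
  F.Hpiece N 𝒩 i j ≠ ⊥

end GFC

/-- The dimension of the support of an `S`-module. -/
noncomputable def mdim (S : Type) [CommRing S] (X : Type) [AddCommGroup X] [Module S X] :
    WithBot (WithTop ℕ) :=
  ringKrullDim (S ⧸ Module.annihilator S X)

end PaperRegularity

/-- The linear map `(Fin r₁ → S) → (Fin r₀ → S)` given by a matrix. -/
noncomputable def matMap {S : Type} [CommRing S] {r₁ r₀ : ℕ} (m : Fin r₁ → Fin r₀ → S) :
    ((Fin r₁ → S) →ₗ[S] (Fin r₀ → S)) where
  toFun z := fun b => ∑ a, m a b • z a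
  map_add' y z := by
    funext b
    simp only [Pi.add_apply, smul_add]
    exact Finset.sum_add_distrib
  map_smul' s z := by
    funext b
    simp only [Pi.smul_apply, RingHom.id_apply]
    rw [Finset.smul_sum]
    exact Finset.sum_congr rfl fun a _ => smul_comm (m a b) s (z a)

/-- A regular local ring: a Noetherian local ring whose maximal ideal is generated by
`dim R` elements. -/
def IsRegularLocal (R : Type) [CommRing R] : Prop :=
  IsNoetherianRing R ∧ ∃ h : IsLocalRing R, ∃ s : Finset R,
    Ideal.span (s : Set R) = @IsLocalRing.maximalIdeal R _ h ∧
    (s.card : WithBot (WithTop ℕ)) = ringKrullDim R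

namespace FrobReg

/-! ### The Koszul cocomplex -/

section Koszul

variable {S : Type} [CommRing S] {M N : Type} [AddCommGroup M] [Module S M]
  [AddCommGroup N] [Module S N] {n : ℕ}

/-- The sign of `s` in the Koszul codifferential at `T`. -/
def sg (s : Fin n) (T : Finset (Fin n)) : ℤ := (-1) ^ ((T.filter (fun a => a < s)).card)

/-- A Koszul cochain extended by zero to all finite subsets, which removes the
dependence of its domain on the cohomological degree. -/
noncomputable def ext0 {i : ℕ} (z : KCochain M n i) (T : Finset (Fin n)) : M :=
  if h : T.card = i then z ⟨T, h⟩ else 0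

lemma ext0_of_card {i : ℕ} (z : KCochain M n i) (T : Finset (Fin n)) (h : T.card = i) :
    ext0 z T = z ⟨T, h⟩ := by simp [ext0, h]

lemma kd_apply (x : Fin n → S) (t i : ℕ) (z : KCochain M n i) (T) :
    kd x t i z T = ∑ s ∈ T.1, sg s T.1 • ((x s ^ t) • ext0 z (T.1.erase s)) := by
  rw [kd, ← Finset.sum_attach T.1]
  refine Finset.sum_congr rfl fun s _ => ?_
  rw [ext0_of_card]; rfl

lemma ext0_kd (x : Fin n → S) (t i : ℕ) (z : KCochain M n i) (T : Finset (Fin n)) :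
    ext0 (kd x t i z) T = ∑ s ∈ T, sg s T • ((x s ^ t) • ext0 z (T.erase s)) := by
  by_cases h : T.card = i + 1
  · rw [ext0_of_card _ _ h, kd_apply]
  · rw [ext0, dif_neg h]
    refine (Finset.sum_eq_zero fun s hs => ?_).symm
    have : (T.erase s).card ≠ i := by
      rw [Finset.card_erase_of_mem hs]
      have := Finset.card_pos.2 ⟨s, hs⟩
      omega
    simp [ext0, this]

lemma sg_mul_self (s : Fin n) (T : Finset (Fin n)) : sg s T * sg s T = 1 := by
  rw [sg, ← mul_pow]; simp

lemma sg_insert (s l : Fin n) (T : Finset (Fin n)) (hl : l ∉ T) :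
    sg s (insert l T) = (if l < s then -1 else 1) * sg s T := by
  unfold sg
  rw [Finset.filter_insert]
  split_ifs with h
  · rw [Finset.card_insert_of_notMem (by simp [hl]), pow_succ]; ring
  · ring

lemma sg_erase (s l : Fin n) (T : Finset (Fin n)) (hl : l ∈ T) :
    sg s T = (if l < s then -1 else 1) * sg s (T.erase l) := by
  conv_lhs => rw [← Finset.insert_erase hl]
  exact sg_insert s l _ (Finset.notMem_erase l T)

lemma kd_kd (x : Fin n → S) (t i : ℕ) (z : KCochain M n i) :
    kd x t (i + 1) (kd x t i z) = 0 := by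
  funext T
  rw [kd_apply]
  simp only [ext0_kd, Finset.smul_sum, Pi.zero_apply]
  rw [Finset.sum_sigma']
  refine Finset.sum_involution (fun a _ => ⟨a.2, a.1⟩) ?_ ?_ ?_ ?_
  · rintro ⟨s, r⟩ h
    simp only [Finset.mem_sigma, Finset.mem_erase] at h
    obtain ⟨hs, hrs, hr⟩ := h
    rw [Finset.erase_right_comm (a := r)]
    rw [sg_erase r s T.1 hs, sg_erase s r T.1 hr]
    simp only [smul_comm (x _ ^ t) (sg _ _), smul_smul (x _ ^ t) (x _ ^ t),
      mul_comm (x r ^ t)]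
    simp only [smul_smul, ← add_smul]
    convert! zero_smul ℤ _
    rcases lt_or_gt_of_ne hrs with h | h
    · simp [h, not_lt.2 h.le]; ring
    · simp [h, not_lt.2 h.le]; ring
  · rintro ⟨s, r⟩ h _ e
    simp only [Finset.mem_sigma, Finset.mem_erase] at h
    simp only [Sigma.mk.injEq] at e
    exact h.2.1 e.1
  · rintro ⟨s, r⟩ h
    simp only [Finset.mem_sigma, Finset.mem_erase] at h ⊢
    exact ⟨h.2.2, h.2.1.symm, h.1⟩
  · rintro ⟨s, r⟩ h; rfl

lemma kd_add (x : Fin n → S) (t i : ℕ) (z w : KCochain M n i) :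
    kd x t i (z + w) = kd x t i z + kd x t i w := by
  funext T
  simp only [kd, Pi.add_apply, smul_add, Finset.sum_add_distrib]

lemma kd_smul (x : Fin n → S) (t i : ℕ) (c : S) (z : KCochain M n i) :
    kd x t i (c • z) = c • kd x t i z := by
  funext T
  simp only [kd, Pi.smul_apply, Finset.smul_sum]
  refine Finset.sum_congr rfl fun s _ => ?_
  rw [smul_comm (x _ ^ t) c, smul_comm _ c]

lemma kd_sub (x : Fin n → S) (t i : ℕ) (z w : KCochain M n i) :
    kd x t i (z - w) = kd x t i z - kd x t i w := by
  funext T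
  simp only [kd, Pi.sub_apply, smul_sub, Finset.sum_sub_distrib]

lemma kd_zero (x : Fin n → S) (t i : ℕ) : kd x t i (0 : KCochain M n i) = 0 := by
  funext T
  simp [kd]

/-- The effect of a linear map on Koszul cochains. -/
def kmap (f : M →ₗ[S] N) {i : ℕ} (z : KCochain M n i) : KCochain N n i := fun T => f (z T)

lemma kd_kmap (x : Fin n → S) (t i : ℕ) (f : M →ₗ[S] N) (z : KCochain M n i) :
    kd x t i (kmap f z) = kmap f (kd x t i z) := by
  funext T
  simp [kd, kmap, map_sum]

lemma kpush_kmap (x : Fin n → S) (u i : ℕ) (f : M →ₗ[S] N) (z : KCochain M n i) :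
    kpush x u i (kmap f z) = kmap f (kpush x u i z) := by
  funext T
  simp [kpush, kmap]

lemma kpush_sub (x : Fin n → S) (u i : ℕ) (z w : KCochain M n i) :
    kpush x u i (z - w) = kpush x u i z - kpush x u i w := by
  funext T
  simp [kpush, smul_sub]

lemma kpush_add (x : Fin n → S) (u i : ℕ) (z w : KCochain M n i) :
    kpush x u i (z + w) = kpush x u i z + kpush x u i w := by
  funext T
  simp [kpush, smul_add]

lemma kpush_smul (x : Fin n → S) (u i : ℕ) (c : S) (z : KCochain M n i) :
    kpush x u i (c • z) = c • kpush x u i z := by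
  funext T
  simp [kpush, smul_comm c]

lemma kpush_zero (x : Fin n → S) (u i : ℕ) : kpush x u i (0 : KCochain M n i) = 0 := by
  funext T
  simp [kpush]

lemma kpush_kpush (x : Fin n → S) (u v i : ℕ) (z : KCochain M n i) :
    kpush x v i (kpush x u i z) = kpush x (u + v) i z := by
  funext T
  simp only [kpush, smul_smul, ← Finset.prod_mul_distrib, pow_add, mul_comm]

lemma kd_kpush (x : Fin n → S) (t u i : ℕ) (z : KCochain M n i) :
    kd x (t + u) i (kpush x u i z) = kpush x u (i + 1) (kd x t i z) := by
  funext T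
  simp only [kd, kpush, Finset.smul_sum]
  refine Finset.sum_congr rfl fun s _ => ?_
  rw [smul_comm (∏ s ∈ T.1, x s ^ u), smul_smul, smul_smul, ← Finset.mul_prod_erase T.1 _ s.2]
  congr 2
  ring

/-- Contraction with the `l`-th basis vector, a nullhomotopy of multiplication by `x_l ^ t`. -/
noncomputable def kcontr (l : Fin n) {i : ℕ} (z : KCochain M n (i + 1)) : KCochain M n i :=
  fun T => if l ∈ T.1 then 0 else sg l (insert l T.1) • ext0 z (insert l T.1)

lemma ext0_kcontr (l : Fin n) {i : ℕ} (z : KCochain M n (i + 1)) (T : Finset (Fin n)) :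
    ext0 (kcontr l z) T = if l ∈ T then 0 else sg l (insert l T) • ext0 z (insert l T) := by
  by_cases h : T.card = i
  · rw [ext0_of_card _ _ h, kcontr]
  · rw [ext0, dif_neg h]
    split_ifs with h1
    · rfl
    · have : (insert l T).card ≠ i + 1 := by
        rw [Finset.card_insert_of_notMem h1]; omega
      simp [ext0, this]

lemma kd_kcontr (x : Fin n → S) (t i : ℕ) (l : Fin n) (z : KCochain M n (i + 1))
    (hz : kd x t (i + 1) z = 0) : kd x t i (kcontr l z) = x l ^ t • z := by
  funext T
  rw [kd_apply, Pi.smul_apply]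
  simp only [ext0_kcontr]
  by_cases hl : l ∈ T.1
  · rw [Finset.sum_eq_single l]
    · rw [if_neg (Finset.notMem_erase l _), Finset.insert_erase hl, smul_comm (x l ^ t), smul_smul,
        sg_mul_self, one_smul, ext0_of_card _ _ T.2]
    · intro s hs hsl
      rw [if_pos (Finset.mem_erase.2 ⟨hsl.symm, hl⟩), smul_zero, smul_zero]
    · exact fun h => absurd hl h
  · have h0 := congrFun hz ⟨insert l T.1, by rw [Finset.card_insert_of_notMem hl, T.2]⟩
    rw [kd_apply, Pi.zero_apply] at h0
    simp only at h0
    rw [Finset.sum_insert hl, Finset.erase_insert hl, ext0_of_card _ _ T.2] at h0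
    have h1 := congrArg (fun m => sg l (insert l T.1) • m) h0
    simp only [smul_add, smul_zero] at h1
    rw [smul_smul, sg_mul_self, one_smul, Finset.smul_sum] at h1
    rw [← sub_eq_zero, ← neg_eq_zero, neg_sub, ← h1, sub_eq_add_neg, ← Finset.sum_neg_distrib]
    congr 1
    refine Finset.sum_congr rfl fun s hs => ?_
    have hsl : s ≠ l := fun h => hl (h ▸ hs)
    rw [if_neg (fun h => hl (Finset.mem_of_mem_erase h)),
      ← Finset.erase_insert_of_ne hsl.symm, sg_insert s l _ hl,
      sg_erase l s (insert l T.1) (Finset.mem_insert_of_mem hs)]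
    simp only [smul_comm (x _ ^ t) (sg _ _), smul_smul, ← neg_smul]
    congr 1
    rcases lt_or_gt_of_ne hsl with h | h
    · simp [h, not_lt.2 h.le]; ring
    · simp [h, not_lt.2 h.le]; ring

lemma smul_eq_zero_of_kd (x : Fin n → S) (t : ℕ) (l : Fin n) (z : KCochain M n 0)
    (hz : kd x t 0 z = 0) : x l ^ t • z = 0 := by
  funext T
  have hT : T = ⟨∅, rfl⟩ := Subtype.ext (Finset.card_eq_zero.1 T.2)
  subst hT
  have h0 := congrFun hz ⟨{l}, Finset.card_singleton l⟩
  rw [kd_apply] at h0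
  have h1 : ext0 z ∅ = z ⟨∅, rfl⟩ := ext0_of_card z ∅ rfl
  simpa [sg, Finset.filter_singleton, h1] using h0

lemma cob_smul_pow (x : Fin n → S) (t i : ℕ) (l : Fin n) (z : KCochain M n i)
    (hz : kd x t i z = 0) : kIsCobound x t i (x l ^ t • z) := by
  cases i with
  | zero => exact smul_eq_zero_of_kd x t l z hz
  | succ i => exact ⟨kcontr l z, kd_kcontr x t i l z hz⟩

lemma cob_zero (x : Fin n → S) (t i : ℕ) : kIsCobound x t i (0 : KCochain M n i) := by
  cases i with
  | zero => rfl
  | succ i => exact ⟨0, kd_zero x t i⟩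

lemma cob_add {x : Fin n → S} {t i : ℕ} {z w : KCochain M n i} (hz : kIsCobound x t i z)
    (hw : kIsCobound x t i w) : kIsCobound x t i (z + w) := by
  cases i with
  | zero => rw [show z = 0 from hz, show w = 0 from hw, add_zero]; exact cob_zero x t 0
  | succ i =>
    obtain ⟨a, rfl⟩ := hz
    obtain ⟨b, rfl⟩ := hw
    exact ⟨a + b, kd_add ..⟩

lemma cob_push {x : Fin n → S} {t i : ℕ} {z : KCochain M n i} (hz : kIsCobound x t i z) (u : ℕ) :
    kIsCobound x (t + u) i (kpush x u i z) := by
  cases i with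
  | zero => rw [show z = 0 from hz, kpush_zero]; exact cob_zero x _ 0
  | succ i =>
    obtain ⟨a, rfl⟩ := hz
    exact ⟨kpush x u i a, kd_kpush ..⟩

lemma cob_kmap {x : Fin n → S} {t i : ℕ} {z : KCochain M n i} (hz : kIsCobound x t i z)
    (f : M →ₗ[S] N) : kIsCobound x t i (kmap f z) := by
  cases i with
  | zero =>
    rw [show z = 0 from hz]
    convert! cob_zero x t 0 using 1
    funext T
    simp [kmap]
  | succ i =>
    obtain ⟨a, rfl⟩ := hz
    exact ⟨kmap f a, kd_kmap ..⟩

lemma kmap_surj {f : M →ₗ[S] N} (hf : Function.Surjective f) {i : ℕ} (z : KCochain N n i) :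
    ∃ w : KCochain M n i, kmap f w = z :=
  ⟨fun T => (hf (z T)).choose, funext fun T => (hf (z T)).choose_spec⟩

lemma cob_lift {x : Fin n → S} {t i : ℕ} {f : M →ₗ[S] N} (hf : Function.Surjective f)
    {z : KCochain N n i} (hz : kIsCobound x t i z) :
    ∃ w : KCochain M n i, kIsCobound x t i w ∧ kmap f w = z := by
  cases i with
  | zero =>
    refine ⟨0, cob_zero x t 0, ?_⟩
    rw [show z = 0 from hz]
    funext T
    simp [kmap]
  | succ i =>
    obtain ⟨a, rfl⟩ := hz
    obtain ⟨b, rfl⟩ := kmap_surj hf a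
    exact ⟨kd x t i b, ⟨b, rfl⟩, (kd_kmap ..).symm⟩

lemma kd_of_cob {x : Fin n → S} {t i : ℕ} {z : KCochain M n i} (hz : kIsCobound x t i z) :
    kd x t i z = 0 := by
  cases i with
  | zero => rw [show z = 0 from hz, kd_zero]
  | succ i =>
    obtain ⟨a, rfl⟩ := hz
    exact kd_kd ..

/-- A cochain eventually becoming a coboundary represents the zero class of the colimit. -/
def Dies (x : Fin n → S) (t i : ℕ) (z : KCochain M n i) : Prop :=
  ∃ u, kIsCobound x (t + u) i (kpush x u i z)

lemma Dies.of_push {x : Fin n → S} {t i : ℕ} {z : KCochain M n i} {u : ℕ}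
    (h : Dies x (t + u) i (kpush x u i z)) : Dies x t i z := by
  obtain ⟨v, hv⟩ := h
  rw [kpush_kpush, add_assoc] at hv
  exact ⟨u + v, hv⟩

lemma Dies.of_cob {x : Fin n → S} {t i : ℕ} {z : KCochain M n i} (h : kIsCobound x t i z) :
    Dies x t i z := ⟨0, cob_push h 0⟩

lemma Dies.add {x : Fin n → S} {t i : ℕ} {z w : KCochain M n i}
    (hz : Dies x t i z) (hw : Dies x t i w) : Dies x t i (z + w) := by
  obtain ⟨u, hu⟩ := hz
  obtain ⟨v, hv⟩ := hw
  refine ⟨u + v, ?_⟩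
  rw [kpush_add]
  refine cob_add ?_ ?_
  · rw [← kpush_kpush, ← add_assoc]; exact cob_push hu v
  · rw [add_comm u v, ← kpush_kpush, ← add_assoc]; exact cob_push hv u

lemma Dies.kmap {x : Fin n → S} {t i : ℕ} {z : KCochain M n i} (hz : Dies x t i z)
    (f : M →ₗ[S] N) : Dies x t i (kmap f z) := by
  obtain ⟨u, hu⟩ := hz
  refine ⟨u, ?_⟩
  rw [kpush_kmap]
  exact cob_kmap hu f

/-- Vanishing of the whole (ungraded) `i`-th local cohomology module of `M`. -/
def KV (x : Fin n → S) (M : Type) [AddCommGroup M] [Module S M] (i : ℕ) : Prop :=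
  ∀ (t : ℕ) (z : KCochain M n i), kd x t i z = 0 → Dies x t i z

lemma kpush_cocycle {x : Fin n → S} {t i : ℕ} {z : KCochain M n i} (h : kd x t i z = 0) (u : ℕ) :
    kd x (t + u) i (kpush x u i z) = 0 := by
  rw [kd_kpush, h, kpush_zero]

lemma KV.of_subsingleton (x : Fin n → S) [Subsingleton M] (i : ℕ) : KV x M i := fun t z _ =>
  ⟨0, by rw [Subsingleton.elim (kpush x 0 i z) 0]; exact cob_zero ..⟩

/-- Local cohomology is half exact. -/
lemma KV.of_exact {x : Fin n → S} {P : Type} [AddCommGroup P] [Module S P] {i : ℕ}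
    (f : M →ₗ[S] N) (g : N →ₗ[S] P) (hf : Function.Injective f) (hg : Function.Surjective g)
    (hfg : Function.Exact f g) (h1 : KV x M i) (h3 : KV x P i) : KV x N i := by
  intro t z hz
  obtain ⟨u, hu⟩ := h3 t (kmap g z) (by rw [kd_kmap, hz]; funext T; simp [kmap])
  obtain ⟨w, hw, hwz⟩ := cob_lift hg hu
  rw [kpush_kmap] at hwz
  have hT : ∀ T, ∃ y, f y = (kpush x u i z - w) T := fun T => by
    refine (hfg _).1 ?_
    have := congrFun hwz T
    simp only [kmap] at this
    rw [Pi.sub_apply, map_sub, this, sub_self]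
  choose y hy using hT
  have hy' : kmap f y = kpush x u i z - w := funext hy
  have hdy : kd x (t + u) i y = 0 := by
    have : kmap f (kd x (t + u) i y) = 0 := by
      rw [← kd_kmap, hy', kd_sub, kpush_cocycle hz, kd_of_cob hw, sub_zero]
    funext T
    exact hf (by simpa [kmap] using congrFun this T)
  refine Dies.of_push (u := u) ?_
  have := ((h1 (t + u) y hdy).kmap f).add (Dies.of_cob hw)
  rwa [hy', sub_add_cancel] at this

lemma KV.of_equiv {x : Fin n → S} {i : ℕ} (f : M ≃ₗ[S] N) (h : KV x M i) : KV x N i := by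
  intro t z hz
  have := (h t (kmap f.symm.toLinearMap z) (by rw [kd_kmap, hz]; funext T; simp [kmap])).kmap
    f.toLinearMap
  convert! this using 1
  funext T
  simp [kmap]

/-- If `x_l` annihilates `M` for all `l`, positive local cohomology vanishes. -/
lemma KV.of_smul_zero {x : Fin n → S} {i : ℕ} (h : ∀ l (m : M), x l • m = 0) :
    KV x M (i + 1) := by
  intro t z _
  refine ⟨1, ?_⟩
  convert! cob_zero x _ _ using 1
  funext T
  obtain ⟨s, hs⟩ : T.1.Nonempty := Finset.card_pos.1 (by rw [T.2]; omega)
  rw [kpush, ← Finset.mul_prod_erase _ _ hs, mul_smul, pow_one, h, Pi.zero_apply]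

/-- If `x_l` is a nonzerodivisor on `M` and every `M / x_l ^ t M` has vanishing local cohomology in
degree `i`, then multiplication by `x_l` is injective on the local cohomology of `M` in degree
`i + 1`, which is also `x_l`-power torsion and hence vanishes. -/
lemma KV.of_regular {x : Fin n → S} {i : ℕ} (l : Fin n) (hreg : ∀ m : M, x l • m = 0 → m = 0)
    (h : ∀ t : ℕ, KV x (M ⧸ LinearMap.range (LinearMap.lsmul S M (x l ^ t))) i) :
    KV x M (i + 1) := by
  have hregt : ∀ (t : ℕ) (m : M), x l ^ t • m = 0 → m = 0 := by
    intro t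
    induction t with
    | zero => intro m hm; simpa using hm
    | succ t ih =>
      intro m hm
      rw [pow_succ, mul_smul] at hm
      exact hreg _ (ih _ hm)
  intro t z hz
  obtain ⟨w, hw⟩ := cob_smul_pow x t (i + 1) l z hz
  set Q := LinearMap.range (LinearMap.lsmul S M (x l ^ t)) with hQ
  obtain ⟨u, hu⟩ := h t t (kmap Q.mkQ w) (by
    rw [kd_kmap, hw]
    funext T
    simp only [kmap, Pi.smul_apply, Pi.zero_apply, Submodule.mkQ_apply,
      Submodule.Quotient.mk_eq_zero]
    exact ⟨z T, rfl⟩)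
  obtain ⟨v, hv, hvw⟩ := cob_lift Q.mkQ_surjective hu
  rw [kpush_kmap] at hvw
  have hT : ∀ T, ∃ y, x l ^ t • y = (kpush x u i w - v) T := fun T => by
    have : (kpush x u i w - v) T ∈ Q := by
      rw [← Submodule.Quotient.mk_eq_zero, Pi.sub_apply, Submodule.Quotient.mk_sub, sub_eq_zero]
      exact (congrFun hvw T).symm
    exact this
  choose y hy using hT
  have hy' : x l ^ t • y = kpush x u i w - v := funext hy
  refine ⟨u, y, ?_⟩
  have h2 : x l ^ t • (kd x (t + u) i y - kpush x u (i + 1) z) = 0 := by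
    rw [smul_sub, ← kd_smul, hy', kd_sub, kd_of_cob hv, sub_zero, kd_kpush, hw, kpush_smul,
      sub_self]
  rw [← sub_eq_zero]
  funext T
  exact hregt t _ (congrFun h2 T)

end Koszul

end FrobReg

namespace FrobReg

/-! ### Grothendieck vanishing -/

section Vanishing

variable {S : Type} [CommRing S] {n : ℕ}

/-- Passing from a prime to a strictly larger one decreases the dimension of the quotient. -/
lemma dim_quot_lt {p q : Ideal S} [p.IsPrime] {r : S} (hpq : p ≤ q) (hr : r ∉ p) (hrq : r ∈ q)
    {d : ℕ} (h : ringKrullDim (S ⧸ p) < ((d + 1 : ℕ) : WithBot (WithTop ℕ))) :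
    ringKrullDim (S ⧸ q) < (d : WithBot (WithTop ℕ)) := by
  have h1 : ringKrullDim (S ⧸ q) + 1 ≤ ringKrullDim (S ⧸ p) := by
    refine ringKrullDim_succ_le_of_surjective (Ideal.Quotient.factor hpq)
      (Ideal.Quotient.factor_surjective hpq) (r := Ideal.Quotient.mk p r) ?_ ?_
    · exact mem_nonZeroDivisors_of_ne_zero (by rwa [Ne, Ideal.Quotient.eq_zero_iff_mem])
    · rwa [Ideal.Quotient.factor_mk, Ideal.Quotient.eq_zero_iff_mem]
  have h2 : ringKrullDim (S ⧸ q) + 1 < ((d + 1 : ℕ) : WithBot ℕ∞) := h1.trans_lt h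
  by_contra h3
  have h4 : (d : WithBot ℕ∞) ≤ ringKrullDim (S ⧸ q) := not_lt.1 h3
  have h5 : (d : WithBot ℕ∞) + 1 ≤ ringKrullDim (S ⧸ q) + 1 := by gcongr
  rw [Nat.cast_succ] at h2
  exact absurd h2 (not_lt.2 h5)

variable [IsNoetherianRing S]

/-- Grothendieck vanishing: if every prime in the support of the finitely generated module `N`
has coheight less than `d`, then local cohomology of `N` vanishes from degree `d` on. -/
theorem KV.of_dim (x : Fin n → S) (d : ℕ) : ∀ (i : ℕ), d ≤ i → ∀ (N : Type) [AddCommGroup N]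
    [Module S N] [Module.Finite S N],
    (∀ P ∈ Module.support S N, ringKrullDim (S ⧸ P.asIdeal) < (d : WithBot (WithTop ℕ))) →
    KV x N i := by
  induction d with
  | zero =>
    intro i _ N _ _ _ h
    have : Subsingleton N := by
      rw [← Module.support_eq_empty_iff (R := S), Set.eq_empty_iff_forall_notMem]
      intro P hP
      have h1 := h P hP
      have h2 : (0 : WithBot (WithTop ℕ)) ≤ ringKrullDim (S ⧸ P.asIdeal) :=
        ringKrullDim_nonneg_of_nontrivial
      exact absurd h1 (not_lt.2 h2)
    exact KV.of_subsingleton x i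
  | succ d ih =>
    intro i hi N _ _ hN
    obtain ⟨i, rfl⟩ : ∃ j, i = j + 1 := ⟨i - 1, by omega⟩
    induction hN using IsNoetherianRing.induction_on_isQuotientEquivQuotientPrime S with
    | subsingleton N => intro _; exact KV.of_subsingleton x _
    | quotient N p f =>
      intro h
      refine KV.of_equiv f.symm ?_
      have hp : ringKrullDim (S ⧸ p.asIdeal) < ((d + 1 : ℕ) : WithBot (WithTop ℕ)) := by
        refine h p ?_
        rw [f.support_eq, Module.support_eq_zeroLocus, Ideal.annihilator_quotient]
        exact (PrimeSpectrum.mem_zeroLocus _ _).2 le_rfl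
      by_cases hx : ∀ l, x l ∈ p.asIdeal
      · refine KV.of_smul_zero fun l m => ?_
        obtain ⟨m, rfl⟩ := Ideal.Quotient.mk_surjective m
        change Ideal.Quotient.mk p.asIdeal (x l * m) = 0
        exact Ideal.Quotient.eq_zero_iff_mem.2 (Ideal.mul_mem_right _ _ (hx l))
      · push Not at hx
        obtain ⟨l, hl⟩ := hx
        refine KV.of_regular l ?_ fun t => ih i (by omega) _ fun P hP => ?_
        · intro m hm
          obtain ⟨m, rfl⟩ := Ideal.Quotient.mk_surjective m
          have : Ideal.Quotient.mk p.asIdeal (x l * m) = 0 := hm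
          rw [Ideal.Quotient.eq_zero_iff_mem] at this ⊢
          exact (p.2.mem_or_mem this).resolve_left hl
        · rw [Module.support_eq_zeroLocus, PrimeSpectrum.mem_zeroLocus] at hP
          refine dim_quot_lt (r := x l ^ t) ?_ (fun h' => hl (p.2.mem_of_pow_mem _ h')) ?_ hp
          · intro a ha
            refine hP (Module.mem_annihilator.2 fun m => ?_)
            obtain ⟨m, rfl⟩ := Submodule.Quotient.mk_surjective _ m
            obtain ⟨m, rfl⟩ := Ideal.Quotient.mk_surjective m
            rw [← Submodule.Quotient.mk_smul]
            have : a • (Ideal.Quotient.mk p.asIdeal m) = 0 := by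
              change Ideal.Quotient.mk p.asIdeal (a * m) = 0
              exact Ideal.Quotient.eq_zero_iff_mem.2 (Ideal.mul_mem_right _ _ ha)
            rw [this, Submodule.Quotient.mk_zero]
          · refine hP (Module.mem_annihilator.2 fun m => ?_)
            obtain ⟨m, rfl⟩ := Submodule.Quotient.mk_surjective _ m
            rw [← Submodule.Quotient.mk_smul, Submodule.Quotient.mk_eq_zero]
            exact ⟨m, rfl⟩
    | exact N₁ N₂ N₃ f g hf hg hfg h₁ h₃ =>
      intro h
      have hs := Module.support_of_exact hfg hf hg
      exact KV.of_exact f g hf hg hfg (h₁ fun P hP => h P (hs ▸ Or.inl hP))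
        (h₃ fun P hP => h P (hs ▸ Or.inr hP))

end Vanishing

/-! ### Homogeneous components and the graded long exact sequence -/

section Graded

variable {S : Type} [CommRing S] {𝒜 : ℤ → AddSubgroup S} {n : ℕ}

/-- `π` is the family of projections onto the homogeneous components of a module graded by `𝒩`
over a ring graded by `𝒜`. -/
structure GProj (𝒜 : ℤ → AddSubgroup S) {N : Type} [AddCommGroup N] [Module S N]
    (𝒩 : ℤ → AddSubgroup N) (π : ℤ → N →+ N) : Prop where
  mem : ∀ j m, π j m ∈ 𝒩 j
  of_mem : ∀ {j m}, m ∈ 𝒩 j → π j m = m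
  smul : ∀ {i j s m}, s ∈ 𝒜 i → π (i + j) (s • m) = s • π j m

lemma IsStdGraded.pow_mem (h : IsStdGraded 𝒜) {i : ℤ} {a : S} (ha : a ∈ 𝒜 i) (t : ℕ) :
    a ^ t ∈ 𝒜 (t * i) := by
  induction t with
  | zero => simpa using h.one_mem
  | succ t ih =>
    have := h.mul_mem ih ha
    rw [pow_succ]
    convert! this using 2
    push_cast
    ring

lemma exists_proj (h : IsStdGraded 𝒜) : ∃ π : ℤ → S →+ S, GProj 𝒜 𝒜 π := by
  classical
  let _ : DirectSum.Decomposition 𝒜 := h.internal.chooseDecomposition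
  let _ : GradedRing 𝒜 :=
    { one_mem := h.one_mem
      mul_mem := fun _ _ _ _ => h.mul_mem }
  refine ⟨fun j => GradedRing.proj 𝒜 j, fun j m => ?_, fun {j m} hm => ?_, fun {i j s m} hs => ?_⟩
  · rw [GradedRing.proj_apply]; exact SetLike.coe_mem _
  · rw [GradedRing.proj_apply]; exact DirectSum.decompose_of_mem_same 𝒜 hm
  · simp only [GradedRing.proj_apply, smul_eq_mul]
    exact DirectSum.coe_decompose_mul_add_of_left_mem 𝒜 hs

variable {B C : Type} [AddCommGroup B] [Module S B] [AddCommGroup C] [Module S C]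
  {ℬ : ℤ → AddSubgroup B} {𝒞 : ℤ → AddSubgroup C}

/-- The degree `j` component of a Koszul cochain for the exponent `t`. -/
def kproj (π : ℤ → B →+ B) (j : ℤ) (t : ℕ) {i : ℕ} (z : KCochain B n i) : KCochain B n i :=
  fun T => π (j + (t * i : ℕ)) (z T)

lemma kd_kproj {x : Fin n → S} (hx : ∀ l (t : ℕ), x l ^ t ∈ 𝒜 t) {π : ℤ → B →+ B}
    (hπ : GProj 𝒜 ℬ π) (j : ℤ) (t i : ℕ) (z : KCochain B n i) :
    kd x t i (kproj π j t z) = kproj π j t (kd x t i z) := by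
  funext T
  simp only [kd, kproj, map_sum, map_zsmul]
  refine Finset.sum_congr rfl fun s _ => ?_
  rw [← hπ.smul (hx s.1 t)]
  congr 3
  push_cast
  ring

lemma strand_kd {x : Fin n → S} (hx : ∀ l (t : ℕ), x l ^ t ∈ 𝒜 t) {π : ℤ → B →+ B}
    (hπ : GProj 𝒜 ℬ π) {j : ℤ} {t i : ℕ} {z : KCochain B n i} (hz : kStrand ℬ t i j z) :
    kStrand ℬ t (i + 1) j (kd x t i z) := by
  have h : kproj π j t z = z := funext fun T => hπ.of_mem (hz T)
  intro T
  rw [← h, kd_kproj hx hπ]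
  exact hπ.mem _ _

lemma GProj.smul_mem {π : ℤ → B →+ B} (hπ : GProj 𝒜 ℬ π) {i j : ℤ} {s : S} {m : B}
    (hs : s ∈ 𝒜 i) (hm : m ∈ ℬ j) : s • m ∈ ℬ (i + j) := by
  rw [← hπ.of_mem hm, ← hπ.smul hs]
  exact hπ.mem _ _

lemma strand_kpush {x : Fin n → S} (hS : IsStdGraded 𝒜) (hx : ∀ l (t : ℕ), x l ^ t ∈ 𝒜 t)
    {π : ℤ → B →+ B}
    (hπ : GProj 𝒜 ℬ π) {j : ℤ} {t i : ℕ} {z : KCochain B n i} (hz : kStrand ℬ t i j z) (u : ℕ) :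
    kStrand ℬ (t + u) i j (kpush x u i z) := by
  intro T
  have h : ∀ A : Finset (Fin n), ∏ s ∈ A, x s ^ u ∈ 𝒜 ((u * A.card : ℕ) : ℤ) := by
    intro A
    induction A using Finset.induction_on with
    | empty => simpa using hS.one_mem
    | insert a A ha ih =>
      rw [Finset.prod_insert ha, Finset.card_insert_of_notMem ha]
      convert! hS.mul_mem (hx a u) ih using 2
      push_cast
      ring
  have h2 := hπ.smul_mem (h T.1) (hz T)
  rw [T.2] at h2
  change _ • z T ∈ _
  convert! h2 using 2
  push_cast
  ring

/-- The degree `j` strand of the long exact sequence of local cohomology for the short exact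
sequence `0 → ker g → B → C → 0`: a nonzero class on `C` either comes from `B` or has nonzero
image under the connecting homomorphism. -/
theorem lcNZ_of_surjective (hS : IsStdGraded 𝒜) {x : Fin n → S}
    (hx : ∀ l (t : ℕ), x l ^ t ∈ 𝒜 t) {πB : ℤ → B →+ B} {πC : ℤ → C →+ C}
    (hB : GProj 𝒜 ℬ πB) (hC : GProj 𝒜 𝒞 πC) (g : B →ₗ[S] C) (hg : Function.Surjective g)
    (hgπ : ∀ j b, g (πB j b) = πC j (g b)) {q : ℕ} {j : ℤ} (h : lcNZ x 𝒞 q j) :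
    lcNZ x ℬ q j ∨
      lcNZ x (fun j => (ℬ j).comap (LinearMap.ker g).subtype.toAddMonoidHom) (q + 1) j := by
  by_contra hcon
  push Not at hcon
  obtain ⟨hnB, hnK⟩ := hcon
  obtain ⟨t, z, hz, hdz, hsurv⟩ := h
  obtain ⟨w₀, hw₀⟩ := kmap_surj hg z
  set w := kproj πB j t w₀ with hw
  have hwz : kmap g w = z := by
    funext T
    change g (πB _ (w₀ T)) = z T
    rw [hgπ, show g (w₀ T) = z T from congrFun hw₀ T, hC.of_mem (hz T)]
  have hws : kStrand ℬ t q j w := fun T => hB.mem _ _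
  have hker : ∀ T, kd x t q w T ∈ LinearMap.ker g := fun T => by
    have : kmap g (kd x t q w) = 0 := by rw [← kd_kmap, hwz, hdz]
    exact congrFun this T
  let y : KCochain (LinearMap.ker g) n (q + 1) := fun T => ⟨kd x t q w T, hker T⟩
  have hyw : kmap (LinearMap.ker g).subtype y = kd x t q w := rfl
  have hdy : kd x t (q + 1) y = 0 := by
    have : kmap (LinearMap.ker g).subtype (kd x t (q + 1) y) = 0 := by
      rw [← kd_kmap, hyw, kd_kd]
    funext T
    exact Subtype.ext (congrFun this T)
  obtain ⟨u, v, hv⟩ : Dies x t (q + 1) y := by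
    by_contra hd
    exact hnK ⟨t, y, strand_kd hx hB hws, hdy, fun u hu => hd ⟨u, hu⟩⟩
  -- The primitive `v` may be replaced by its component in the strand.
  set v' := kproj πB j (t + u) (kmap (LinearMap.ker g).subtype v) with hv'
  have hdv' : kd x (t + u) q v' = kpush x u (q + 1) (kd x t q w) := by
    rw [hv', kd_kproj hx hB, kd_kmap, hv, ← kpush_kmap, hyw]
    funext T
    exact hB.of_mem (strand_kpush hS hx hB (strand_kd hx hB hws) u T)
  have hgv' : kmap g v' = 0 := by
    funext T
    change g (πB _ _) = 0
    rw [hgπ]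
    change πC _ (g (v T).1) = 0
    rw [(v T).2, map_zero]
  have hd : Dies x (t + u) q (kpush x u q w - v') := by
    by_contra hd
    refine hnB ⟨t + u, kpush x u q w - v', fun T => ?_, ?_, fun u hu => hd ⟨u, hu⟩⟩
    · exact (ℬ _).sub_mem (strand_kpush hS hx hB hws u T) (hB.mem _ _)
    · rw [kd_sub, hdv', kd_kpush, sub_self]
  have hd2 := hd.kmap g
  have : kmap g (kpush x u q w - v') = kpush x u q z := by
    rw [← hwz, kpush_kmap]
    funext T
    have := congrFun hgv' T
    simp only [kmap, Pi.zero_apply] at this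
    simp only [kmap, Pi.sub_apply, map_sub, this, sub_zero]
  rw [this] at hd2
  obtain ⟨u', hu'⟩ := hd2.of_push
  exact hsurv u' hu'

lemma not_lcNZ_of_KV {x : Fin n → S} {q : ℕ} {j : ℤ} (h : KV x B q) : ¬ lcNZ x ℬ q j := by
  rintro ⟨t, z, _, hdz, hs⟩
  obtain ⟨u, hu⟩ := h t z hdz
  exact hs u hu

lemma cob_pi {r : ℕ} {x : Fin n → S} {t i : ℕ} {z : KCochain (Fin r → B) n i}
    (h : ∀ a, kIsCobound x t i (kmap (LinearMap.proj a : (Fin r → B) →ₗ[S] B) z)) :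
    kIsCobound x t i z := by
  cases i with
  | zero => exact funext fun T => funext fun a => congrFun (show kmap _ z = 0 from h a) T
  | succ i =>
    choose w hw using h
    refine ⟨fun T a => w a T, ?_⟩
    funext T a
    rw [show z T a = kmap (LinearMap.proj a : (Fin r → B) →ₗ[S] B) z T from rfl, ← hw a]
    exact (congrFun (kd_kmap x t i (LinearMap.proj a : (Fin r → B) →ₗ[S] B)
      (fun T a => w a T)) T).symm

/-- Local cohomology commutes with finite sums of shifts. -/
lemma lcNZ_pi {r : ℕ} {x : Fin n → S} {δ : Fin r → ℤ} {q : ℕ} {j : ℤ}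
    (h : lcNZ x (fun j => AddSubgroup.pi Set.univ (fun a : Fin r => ℬ (j - δ a))) q j) :
    ∃ a, lcNZ x ℬ q (j - δ a) := by
  by_contra hcon
  push Not at hcon
  obtain ⟨t, z, hz, hdz, hs⟩ := h
  have hd : ∀ a, ∃ u, kIsCobound x (t + u) q
      (kpush x u q (kmap (LinearMap.proj a : (Fin r → B) →ₗ[S] B) z)) := by
    intro a
    by_contra hd
    push Not at hd
    refine hcon a ⟨t, kmap (LinearMap.proj a : (Fin r → B) →ₗ[S] B) z, fun T => ?_, ?_, hd⟩
    · have := hz T a (Set.mem_univ a)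
      change z T a ∈ ℬ _
      rw [show j - δ a + ((t * q : ℕ) : ℤ) = j + ((t * q : ℕ) : ℤ) - δ a by ring]
      exact this
    · rw [kd_kmap, hdz]
      funext T
      simp [kmap]
  choose u hu using hd
  refine hs (∑ a, u a) (cob_pi fun a => ?_)
  obtain ⟨c, hc⟩ : ∃ c, ∑ a, u a = u a + c :=
    ⟨_, (Finset.add_sum_erase _ _ (Finset.mem_univ a)).symm⟩
  rw [hc, ← kpush_kmap, ← kpush_kpush, ← add_assoc]
  exact cob_push (hu a) c

end Graded

end FrobReg

namespace FrobReg

/-! ### Vanishing of first Tor modules -/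

section Tor

open TensorProduct Pointwise

variable {R A : Type} [CommRing R] [CommRing A] [Algebra R A]

variable (R A) in
/-- The vanishing of `Tor₁^R(A, N)`, expressed without derived functors: tensoring with `A` keeps
`K → P` injective for every presentation `0 → K → P → N → 0` with `P` finitely generated. -/
def TorVan (N : Type) [AddCommGroup N] [Module R N] : Prop :=
  ∀ (K P : Type) [AddCommGroup K] [AddCommGroup P] [Module R K] [Module R P] [Module.Finite R P]
    (f : K →ₗ[R] P) (g : P →ₗ[R] N), Function.Injective f → Function.Surjective g →
    Function.Exact f g → Function.Injective (f.lTensor A)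

variable {N N₁ N₂ N₃ K P P₀ K₀ : Type}
  [AddCommGroup N] [Module R N] [AddCommGroup N₁] [Module R N₁] [AddCommGroup N₂] [Module R N₂]
  [AddCommGroup N₃] [Module R N₃] [AddCommGroup K] [Module R K] [AddCommGroup P] [Module R P]
  [AddCommGroup K₀] [Module R K₀] [AddCommGroup P₀] [Module R P₀]

lemma TorVan.of_equiv (e : N₁ ≃ₗ[R] N₂) (h : TorVan R A N₁) : TorVan R A N₂ := by
  intro K P _ _ _ _ _ f g hf hg hfg
  refine h K P f (e.symm.toLinearMap ∘ₗ g) hf (e.symm.surjective.comp hg) fun y => ?_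
  rw [← hfg y]
  simp

lemma TorVan.of_subsingleton [Subsingleton N] : TorVan R A N := by
  intro K P _ _ _ _ _ f g hf hg hfg
  have hs : Function.Surjective f := fun y => (hfg y).1 (Subsingleton.elim _ _)
  exact ((LinearEquiv.ofBijective f ⟨hf, hs⟩).lTensor A).injective

lemma TorVan.of_exact [IsNoetherianRing R] (u : N₁ →ₗ[R] N₂) (v : N₂ →ₗ[R] N₃)
    (hu : Function.Injective u)
    (hv : Function.Surjective v) (huv : Function.Exact u v) (h₁ : TorVan R A N₁)
    (h₃ : TorVan R A N₃) : TorVan R A N₂ := by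
  intro K P _ _ _ _ _ f g hf hg hfg
  let Q := LinearMap.ker (v ∘ₗ g)
  have hQ : ∀ y : Q, g y ∈ LinearMap.range u := fun y => (huv _).1 y.2
  let g' : Q →ₗ[R] N₁ := (LinearEquiv.ofInjective u hu).symm.toLinearMap ∘ₗ
    (g ∘ₗ Q.subtype).codRestrict (LinearMap.range u) hQ
  have hg' : ∀ y : Q, u (g' y) = g y := by
    intro y
    have := congrArg Subtype.val ((LinearEquiv.ofInjective u hu).apply_symm_apply ⟨g y, hQ y⟩)
    exact this
  let f' : K →ₗ[R] Q := f.codRestrict Q fun y => by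
    change v (g (f y)) = 0
    rw [hfg.apply_apply_eq_zero, map_zero]
  have h₁' : Function.Injective (f'.lTensor A) := by
    refine h₁ K Q f' g' (fun a b hab => hf (congrArg Subtype.val hab)) (fun y => ?_) fun y => ?_
    · obtain ⟨z, hz⟩ := hg (u y)
      refine ⟨⟨z, ?_⟩, hu ?_⟩
      · change v (g z) = 0
        rw [hz, huv.apply_apply_eq_zero]
      · exact (hg' _).trans hz
    · rw [← hu.eq_iff, hg', map_zero, hfg y.1]
      constructor
      · rintro ⟨k, hk⟩
        exact ⟨k, Subtype.ext hk⟩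
      · rintro ⟨k, hk⟩
        exact ⟨k, congrArg Subtype.val hk⟩
  have h₃' : Function.Injective (Q.subtype.lTensor A) :=
    h₃ Q P Q.subtype (v ∘ₗ g) Q.injective_subtype (hv.comp hg)
      (LinearMap.exact_subtype_ker_map _)
  have : f = Q.subtype ∘ₗ f' := rfl
  rw [this, LinearMap.lTensor_comp]
  exact h₃'.comp h₁'

/-- The vanishing of `Tor₁` can be tested on a single projective presentation. -/
lemma TorVan.of_projective [Module.Projective R P₀] (f₀ : K₀ →ₗ[R] P₀) (g₀ : P₀ →ₗ[R] N)
    (hg₀ : Function.Surjective g₀) (h₀ : Function.Exact f₀ g₀)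
    (h : Function.Injective (f₀.lTensor A)) : TorVan R A N := by
  intro K P _ _ _ _ _ f g hf hg hfg
  obtain ⟨φ, hφ⟩ := Module.projective_lifting_property g g₀ hg
  have hφ' : ∀ y, g (φ y) = g₀ y := fun y => LinearMap.congr_fun hφ y
  have hr : ∀ y : K₀, φ (f₀ y) ∈ LinearMap.range f := fun y => by
    refine (hfg _).1 ?_
    rw [hφ', h₀.apply_apply_eq_zero]
  let e := LinearEquiv.ofInjective f hf
  let ψ : K₀ →ₗ[R] K := e.symm.toLinearMap ∘ₗ (φ ∘ₗ f₀).codRestrict (LinearMap.range f) hr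
  have hψ : ∀ y, f (ψ y) = φ (f₀ y) := fun y =>
    congrArg Subtype.val (e.apply_symm_apply ⟨φ (f₀ y), hr y⟩)
  let α : K₀ →ₗ[R] K × P₀ := (-ψ).prod f₀
  let β : K × P₀ →ₗ[R] P := f.coprod φ
  have hαβ : Function.Exact α β := by
    rintro ⟨k, y⟩
    change f k + φ y = 0 ↔ _
    constructor
    · intro hky
      have : g₀ y = 0 := by
        rw [← hφ', eq_neg_of_add_eq_zero_right hky, map_neg, hfg.apply_apply_eq_zero, neg_zero]
      obtain ⟨k₀, rfl⟩ := (h₀ y).1 this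
      refine ⟨k₀, Prod.ext (hf ?_) rfl⟩
      change f (-ψ k₀) = f k
      rw [map_neg, hψ, eq_neg_of_add_eq_zero_left hky]
    · rintro ⟨k₀, hk⟩
      obtain ⟨rfl, rfl⟩ := Prod.ext_iff.1 hk
      change f (-ψ k₀) + φ (f₀ k₀) = 0
      rw [map_neg, hψ, neg_add_cancel]
  have hβ : Function.Surjective β := by
    intro y
    obtain ⟨y₀, hy₀⟩ := hg₀ (g y)
    obtain ⟨k, hk⟩ := (hfg (y - φ y₀)).1 (by rw [map_sub, hφ', hy₀, sub_self])
    refine ⟨(k, y₀), ?_⟩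
    change f k + φ y₀ = y
    rw [hk, sub_add_cancel]
  rw [injective_iff_map_eq_zero]
  intro z hz
  have h1 : β.lTensor A ((LinearMap.inl R K P₀).lTensor A z) = 0 := by
    rw [← LinearMap.comp_apply, ← LinearMap.lTensor_comp, LinearMap.coprod_inl, hz]
  obtain ⟨w, hw⟩ := (lTensor_exact A hαβ hβ _).1 h1
  have h2 : f₀.lTensor A w = 0 := by
    have h3 := congrArg ((LinearMap.snd R K P₀).lTensor A) hw
    rw [← LinearMap.comp_apply, ← LinearMap.lTensor_comp, LinearMap.snd_prod,
      ← LinearMap.comp_apply, ← LinearMap.lTensor_comp, LinearMap.snd_comp_inl] at h3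
    simpa using h3
  have h4 : w = 0 := h (by rw [h2, map_zero])
  rw [h4, map_zero] at hw
  have h5 := congrArg ((LinearMap.fst R K P₀).lTensor A) hw
  rw [← LinearMap.comp_apply, ← LinearMap.lTensor_comp, LinearMap.fst_comp_inl] at h5
  simpa using h5.symm

lemma TorVan.self : TorVan R A R := by
  refine TorVan.of_projective (K₀ := PUnit) (0 : PUnit →ₗ[R] R) LinearMap.id
    Function.surjective_id ?_ ?_
  · intro y
    constructor
    · rintro rfl
      exact ⟨0, rfl⟩
    · rintro ⟨_, rfl⟩
      rfl
  · exact Function.injective_of_subsingleton _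

/-- The kernel of `P → N → N / x N` is generated by the kernel `K` of `P → N` together with
`x P`. -/
lemma exact_quot {f : K →ₗ[R] P} {g : P →ₗ[R] N} (hg : Function.Surjective g)
    (hfg : Function.Exact f g) (x : R) :
    LinearMap.range (f.coprod (LinearMap.lsmul R P x)) =
      LinearMap.ker ((Submodule.mkQ (x • (⊤ : Submodule R N))) ∘ₗ g) := by
  ext y
  simp only [LinearMap.mem_range, LinearMap.mem_ker, LinearMap.comp_apply, Submodule.mkQ_apply,
    Submodule.Quotient.mk_eq_zero, LinearMap.coprod_apply, LinearMap.lsmul_apply, Prod.exists]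
  constructor
  · rintro ⟨k, z, rfl⟩
    rw [map_add, hfg.apply_apply_eq_zero, zero_add, map_smul]
    exact Submodule.smul_mem_pointwise_smul _ _ _ trivial
  · rintro ⟨w, -, hw⟩
    obtain ⟨z, rfl⟩ := hg w
    obtain ⟨k, hk⟩ := (hfg (y - x • z)).1 (by rw [map_sub, map_smul, ← hw]; exact sub_self _)
    exact ⟨k, z, by rw [hk, sub_add_cancel]⟩

lemma exact_coprod_smul {f : K →ₗ[R] P} {g : P →ₗ[R] N} (hf : Function.Injective f)
    (hfg : Function.Exact f g) {x : R} (hx : IsSMulRegular N x) :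
    Function.Exact ((-LinearMap.lsmul R K x).prod f) (f.coprod (LinearMap.lsmul R P x)) := by
  rintro ⟨k, y⟩
  change f k + x • y = 0 ↔ _
  constructor
  · intro hky
    have : g y = 0 := by
      refine hx ?_
      change x • g y = x • 0
      rw [smul_zero, ← map_smul, eq_neg_of_add_eq_zero_right hky, map_neg,
        hfg.apply_apply_eq_zero, neg_zero]
    obtain ⟨k₀, rfl⟩ := (hfg y).1 this
    refine ⟨k₀, Prod.ext (hf ?_) rfl⟩
    change f (-(x • k₀)) = f k
    rw [map_neg, map_smul, eq_neg_of_add_eq_zero_left hky]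
  · rintro ⟨k₀, hk⟩
    obtain ⟨rfl, rfl⟩ := Prod.ext_iff.1 hk
    change f (-(x • k₀)) + x • f k₀ = 0
    rw [map_neg, map_smul, neg_add_cancel]

/-- Descent of vanishing of `Tor₁` along a regular element, by Nakayama's lemma. -/
lemma TorVan.of_quot [IsNoetherianRing R] [IsNoetherianRing A] [IsLocalRing A] {x : R}
    (hxA : algebraMap R A x ∈ IsLocalRing.maximalIdeal A) (hx : IsSMulRegular N x)
    (h : TorVan R A (QuotSMulTop x N)) : TorVan R A N := by
  intro K P _ _ _ _ _ f g hf hg hfg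
  have hK : Module.Finite R K := Module.Finite.of_injective f hf
  let β := f.coprod (LinearMap.lsmul R P x)
  let Q := LinearMap.range β
  have hQ : Function.Injective (Q.subtype.lTensor A) := by
    refine h Q P Q.subtype ((Submodule.mkQ _) ∘ₗ g) Q.injective_subtype
      ((Submodule.mkQ_surjective _).comp hg) ?_
    rw [LinearMap.exact_iff, Submodule.range_subtype]
    exact (exact_quot hg hfg x).symm
  have hex : Function.Exact ((-LinearMap.lsmul R K x).prod f) β.rangeRestrict := by
    intro y
    rw [← exact_coprod_smul hf hfg hx y]
    exact Subtype.ext_iff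
  have key : ∀ z : A ⊗[R] K, f.lTensor A z = 0 → ∃ w, f.lTensor A w = 0 ∧ x • w = z := by
    intro z hz
    have h1 : β.rangeRestrict.lTensor A ((LinearMap.inl R K P).lTensor A z) = 0 := by
      refine hQ ?_
      rw [map_zero, ← LinearMap.comp_apply, ← LinearMap.comp_apply, ← LinearMap.lTensor_comp,
        ← LinearMap.lTensor_comp]
      exact hz ▸ congrArg (fun t => LinearMap.lTensor A t z) (f.coprod_inl _)
    obtain ⟨w, hw⟩ := (lTensor_exact A hex β.surjective_rangeRestrict _).1 h1
    refine ⟨-w, ?_, ?_⟩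
    · have h3 := congrArg ((LinearMap.snd R K P).lTensor A) hw
      rw [← LinearMap.comp_apply, ← LinearMap.lTensor_comp, LinearMap.snd_prod,
        ← LinearMap.comp_apply, ← LinearMap.lTensor_comp, LinearMap.snd_comp_inl] at h3
      rw [map_neg, h3]
      simp
    · have h3 := congrArg ((LinearMap.fst R K P).lTensor A) hw
      rw [← LinearMap.comp_apply, ← LinearMap.lTensor_comp, LinearMap.fst_prod,
        ← LinearMap.comp_apply, ← LinearMap.lTensor_comp, LinearMap.fst_comp_inl] at h3
      rw [LinearMap.lTensor_id, LinearMap.id_apply] at h3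
      rw [← h3]
      have : -LinearMap.lsmul R K x = (-x) • LinearMap.id := by
        ext; simp
      rw [this, LinearMap.lTensor_smul]
      simp
  let L : Submodule A (A ⊗[R] K) :=
    LinearMap.ker (TensorProduct.AlgebraTensorModule.lTensor A A f)
  have hL : ∀ z, z ∈ L ↔ f.lTensor A z = 0 := fun z => Iff.rfl
  have hLbot : L = ⊥ := by
    refine Submodule.eq_bot_of_le_smul_of_le_jacobson_bot (Ideal.span {algebraMap R A x}) L
      (IsNoetherian.noetherian L) ?_ ?_
    · intro z hz
      obtain ⟨w, hw, rfl⟩ := key z ((hL z).1 hz)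
      rw [← algebraMap_smul A x w]
      exact Submodule.smul_mem_smul (Ideal.mem_span_singleton_self _) ((hL w).2 hw)
    · rw [IsLocalRing.jacobson_eq_maximalIdeal _ bot_ne_top, Ideal.span_le]
      simpa using hxA
  rw [injective_iff_map_eq_zero]
  intro z hz
  have : z ∈ L := (hL z).2 hz
  rwa [hLbot, Submodule.mem_bot] at this

/-- Vanishing of `Tor₁` passes to the quotient by an element regular on both `N` and `A ⊗ N`. -/
lemma TorVan.quot [Module.Finite R N] {x : R} (hx : IsSMulRegular N x)
    (hxA : IsSMulRegular (A ⊗[R] N) x) (h : TorVan R A N) : TorVan R A (QuotSMulTop x N) := by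
  obtain ⟨r, g, hg⟩ := Module.Finite.exists_fin' R N
  let K := LinearMap.ker g
  let f : K →ₗ[R] (Fin r → R) := K.subtype
  have hf : Function.Injective f := K.injective_subtype
  have hfg : Function.Exact f g := LinearMap.exact_subtype_ker_map _
  have hfA := h K (Fin r → R) f g hf hg hfg
  let β := f.coprod (LinearMap.lsmul R (Fin r → R) x)
  let Q := LinearMap.range β
  refine TorVan.of_projective Q.subtype ((Submodule.mkQ _) ∘ₗ g)
      ((Submodule.mkQ_surjective _).comp hg) ?_ ?_
  · rw [LinearMap.exact_iff, Submodule.range_subtype]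
    exact (exact_quot hg hfg x).symm
  rw [injective_iff_map_eq_zero]
  intro z hz
  obtain ⟨y, rfl⟩ := LinearMap.lTensor_surjective A β.surjective_rangeRestrict z
  have hβ : β.lTensor A y = 0 := by
    rw [← hz, ← LinearMap.comp_apply, ← LinearMap.lTensor_comp]
    rfl
  set y₁ := (LinearMap.fst R K (Fin r → R)).lTensor A y with hy₁
  set y₂ := (LinearMap.snd R K (Fin r → R)).lTensor A y with hy₂
  have hy : y = (LinearMap.inl R K (Fin r → R)).lTensor A y₁ +
      (LinearMap.inr R K (Fin r → R)).lTensor A y₂ := by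
    rw [hy₁, hy₂, ← LinearMap.comp_apply, ← LinearMap.comp_apply, ← LinearMap.lTensor_comp,
      ← LinearMap.lTensor_comp, ← LinearMap.add_apply, ← LinearMap.lTensor_add]
    have : LinearMap.inl R K (Fin r → R) ∘ₗ LinearMap.fst R K (Fin r → R) +
      LinearMap.inr R K (Fin r → R) ∘ₗ LinearMap.snd R K (Fin r → R) = LinearMap.id := by
      ext <;> simp
    rw [this]
    simp
  have hls : ∀ (X : Type) [AddCommGroup X] [Module R X] (v : A ⊗[R] X),
      (LinearMap.lsmul R X x).lTensor A v = x • v := by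
    intro X _ _ v
    have : LinearMap.lsmul R X x = x • LinearMap.id := by ext; simp
    rw [this, LinearMap.lTensor_smul]
    simp
  have hβ' : f.lTensor A y₁ + x • y₂ = 0 := by
    have e1 : β.lTensor A ((LinearMap.inl R K (Fin r → R)).lTensor A y₁) = f.lTensor A y₁ := by
      rw [← LinearMap.comp_apply, ← LinearMap.lTensor_comp, LinearMap.coprod_inl]
    have e2 : β.lTensor A ((LinearMap.inr R K (Fin r → R)).lTensor A y₂) = x • y₂ := by
      rw [← LinearMap.comp_apply, ← LinearMap.lTensor_comp, LinearMap.coprod_inr, hls]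
    rw [← e1, ← e2, ← map_add, ← hy, hβ]
  have hgy : g.lTensor A y₂ = 0 := by
    refine hxA ?_
    change x • _ = x • 0
    rw [smul_zero, ← map_smul, eq_neg_of_add_eq_zero_right hβ', map_neg,
      (lTensor_exact A hfg hg).apply_apply_eq_zero, neg_zero]
  obtain ⟨w, hw⟩ := (lTensor_exact A hfg hg _).1 hgy
  have hw1 : y₁ = -(x • w) := by
    refine hfA ?_
    rw [map_neg, map_smul, hw, eq_neg_of_add_eq_zero_left hβ']
  have hyw : y = ((-LinearMap.lsmul R K x).prod f).lTensor A w := by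
    have : (-LinearMap.lsmul R K x).prod f = LinearMap.inl R K (Fin r → R) ∘ₗ
      (-LinearMap.lsmul R K x) + LinearMap.inr R K (Fin r → R) ∘ₗ f := by
      ext <;> simp
    rw [this, LinearMap.lTensor_add, LinearMap.add_apply, LinearMap.lTensor_comp,
      LinearMap.lTensor_comp, LinearMap.comp_apply, LinearMap.comp_apply, hw,
      LinearMap.lTensor_neg, LinearMap.neg_apply, hls, ← hw1]
    exact hy
  have hz0 : β.rangeRestrict ∘ₗ ((-LinearMap.lsmul R K x).prod f) = 0 := by
    ext1 k
    exact Subtype.ext ((exact_coprod_smul hf hfg hx).apply_apply_eq_zero k)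
  rw [hyw, ← LinearMap.comp_apply, ← LinearMap.lTensor_comp, hz0]
  simp

lemma TorVan.quot_list (rs : List R) : ∀ (N : Type) [AddCommGroup N] [Module R N]
    [Module.Finite R N], TorVan R A N → RingTheory.Sequence.IsWeaklyRegular N rs →
    RingTheory.Sequence.IsWeaklyRegular (A ⊗[R] N) rs →
    TorVan R A (N ⧸ (Ideal.ofList rs • ⊤ : Submodule R N)) := by
  induction rs with
  | nil =>
    intro N _ _ _ h _ _
    exact h.of_equiv (Submodule.quotEquivOfEqBot _ (by simp)).symm
  | cons r rs ih =>
    intro N _ _ _ h h1 h2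
    rw [RingTheory.Sequence.isWeaklyRegular_cons_iff] at h1 h2
    refine (ih (QuotSMulTop r N) (h.quot h1.1 h2.1) h1.2 ?_).of_equiv
      (Submodule.quotOfListConsSMulTopEquivQuotSMulTopInner N r rs).symm
    exact ((QuotSMulTop.tensorQuotSMulTopEquivQuotSMulTop r A N).isWeaklyRegular_congr rs).2 h2.2

end Tor

end FrobReg

namespace FrobReg

/-! ### Regular sequences and regular local rings -/

section Sequences

open RingTheory.Sequence Pointwise

variable {R : Type} [CommRing R] {M M₁ M₂ M₃ : Type} [AddCommGroup M] [Module R M]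
  [AddCommGroup M₁] [Module R M₁] [AddCommGroup M₂] [Module R M₂] [AddCommGroup M₃] [Module R M₃]

lemma mem_smul_top {r : R} {m : M} : m ∈ r • (⊤ : Submodule R M) ↔ ∃ w, r • w = m :=
  ⟨fun ⟨w, _, hw⟩ => ⟨w, hw⟩, fun ⟨w, hw⟩ => ⟨w, trivial, hw⟩⟩

lemma weaklyRegular_of_exact (rs : List R) : ∀ (M₁ M₂ M₃ : Type) [AddCommGroup M₁]
    [AddCommGroup M₂] [AddCommGroup M₃] [Module R M₁] [Module R M₂] [Module R M₃]
    (u : M₁ →ₗ[R] M₂) (v : M₂ →ₗ[R] M₃), Function.Injective u → Function.Surjective v →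
    Function.Exact u v → IsWeaklyRegular M₁ rs → IsWeaklyRegular M₃ rs →
    IsWeaklyRegular M₂ rs := by
  induction rs with
  | nil => intros; exact IsWeaklyRegular.nil _ _
  | cons r rs ih =>
    intro M₁ M₂ M₃ _ _ _ _ _ _ u v hu hv huv h1 h3
    rw [isWeaklyRegular_cons_iff] at h1 h3 ⊢
    obtain ⟨h1r, h1⟩ := h1
    obtain ⟨h3r, h3⟩ := h3
    have h1r' : ∀ m : M₁, r • m = 0 → m = 0 := fun m hm => h1r (by simpa using hm)
    have h3r' : ∀ m : M₃, r • m = 0 → m = 0 := fun m hm => h3r (by simpa using hm)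
    refine ⟨?_, ih _ _ _ (QuotSMulTop.map r u) (QuotSMulTop.map r v) ?_
      (QuotSMulTop.map_surjective r hv) (QuotSMulTop.map_exact r huv hv) h1 h3⟩
    · intro a b hab
      have hab' : r • (a - b) = 0 := by rw [smul_sub, sub_eq_zero]; exact hab
      obtain ⟨m, hm⟩ := (huv (a - b)).1 (h3r' _ (by rw [← map_smul, hab', map_zero]))
      have : m = 0 := h1r' _ (hu (by rw [map_smul, hm, hab', map_zero]))
      rw [this, map_zero] at hm
      exact sub_eq_zero.1 hm.symm
    · rw [injective_iff_map_eq_zero]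
      intro m hm
      obtain ⟨m, rfl⟩ := Submodule.Quotient.mk_surjective _ m
      rw [QuotSMulTop.map_apply_mk, Submodule.Quotient.mk_eq_zero, mem_smul_top] at hm
      rw [Submodule.Quotient.mk_eq_zero, mem_smul_top]
      obtain ⟨w, hw⟩ := hm
      obtain ⟨m', rfl⟩ := (huv w).1 (h3r' _ (by
        rw [← map_smul, hw, huv.apply_apply_eq_zero]))
      exact ⟨m', hu (by rw [map_smul, hw])⟩

lemma weaklyRegular_quot_pow {r : R} (hr : IsSMulRegular M r) {rs : List R}
    (h : IsWeaklyRegular (QuotSMulTop r M) rs) (t : ℕ) :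
    IsWeaklyRegular (QuotSMulTop (r ^ t) M) rs := by
  induction t with
  | zero =>
    have : Subsingleton (QuotSMulTop (r ^ 0) M) := by
      rw [Submodule.Quotient.subsingleton_iff, eq_top_iff]
      exact fun m _ => mem_smul_top.2 ⟨m, by simp⟩
    rw [isWeaklyRegular_iff]
    intro i hi a b hab
    have : Subsingleton ((QuotSMulTop (r ^ 0) M) ⧸
      (Ideal.ofList (rs.take i) • ⊤ : Submodule R (QuotSMulTop (r ^ 0) M))) :=
      (Submodule.Quotient.mk_surjective _).subsingleton
    exact Subsingleton.elim _ _
  | succ t ih =>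
    have h1 : r • (⊤ : Submodule R M) ≤
        (r ^ (t + 1) • (⊤ : Submodule R M)).comap (LinearMap.lsmul R M (r ^ t)) := by
      intro m hm
      obtain ⟨w, rfl⟩ := mem_smul_top.1 hm
      exact mem_smul_top.2 ⟨w, by simp [smul_smul, pow_succ, mul_comm]⟩
    have h2 : r ^ (t + 1) • (⊤ : Submodule R M) ≤
        (r ^ t • (⊤ : Submodule R M)).comap LinearMap.id := by
      intro m hm
      obtain ⟨w, rfl⟩ := mem_smul_top.1 hm
      exact mem_smul_top.2 ⟨r • w, by simp [smul_smul, pow_succ]⟩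
    refine weaklyRegular_of_exact rs _ _ _ (Submodule.mapQ _ _ _ h1) (Submodule.mapQ _ _ _ h2)
      ?_ ?_ ?_ h ih
    · rw [injective_iff_map_eq_zero]
      intro m hm
      obtain ⟨m, rfl⟩ := Submodule.Quotient.mk_surjective _ m
      rw [Submodule.mapQ_apply, Submodule.Quotient.mk_eq_zero, mem_smul_top] at hm
      obtain ⟨w, hw⟩ := hm
      rw [Submodule.Quotient.mk_eq_zero, mem_smul_top]
      refine ⟨w, hr.pow t ?_⟩
      change r ^ t • r • w = r ^ t • m
      rw [smul_smul, ← pow_succ, hw]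
      rfl
    · intro m
      obtain ⟨m, rfl⟩ := Submodule.Quotient.mk_surjective _ m
      exact ⟨Submodule.Quotient.mk m, rfl⟩
    · intro m
      obtain ⟨m, rfl⟩ := Submodule.Quotient.mk_surjective _ m
      rw [Submodule.mapQ_apply, Submodule.Quotient.mk_eq_zero, mem_smul_top]
      constructor
      · rintro ⟨w, hw⟩
        refine ⟨Submodule.Quotient.mk w, ?_⟩
        rw [Submodule.mapQ_apply]
        exact congrArg _ hw
      · rintro ⟨w, hw⟩
        obtain ⟨w, rfl⟩ := Submodule.Quotient.mk_surjective _ w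
        rw [Submodule.mapQ_apply, Submodule.Quotient.eq, mem_smul_top] at hw
        obtain ⟨y, hy⟩ := hw
        refine ⟨w - r • y, ?_⟩
        rw [smul_sub, smul_smul, ← pow_succ, hy]
        simp

/-- Powers of a weakly regular sequence form a weakly regular sequence. -/
lemma weaklyRegular_pow (t : ℕ) (rs : List R) : ∀ (M : Type) [AddCommGroup M] [Module R M],
    IsWeaklyRegular M rs → IsWeaklyRegular M (rs.map (· ^ t)) := by
  induction rs with
  | nil => intro M _ _ _; exact IsWeaklyRegular.nil _ _
  | cons r rs ih =>
    intro M _ _ h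
    rw [isWeaklyRegular_cons_iff] at h
    rw [List.map_cons, isWeaklyRegular_cons_iff]
    exact ⟨h.1.pow t, ih _ (weaklyRegular_quot_pow h.1 h.2 t)⟩

end Sequences

section RegularLocal

open RingTheory.Sequence IsLocalRing

variable {R : Type} [CommRing R] [IsLocalRing R]

lemma quot_local {a : R} (ha : a ∈ maximalIdeal R) : IsLocalRing (R ⧸ Ideal.span {a}) := by
  have : Nontrivial (R ⧸ Ideal.span {a}) := by
    refine Ideal.Quotient.nontrivial_iff.2 fun h => ?_
    exact (maximalIdeal.isMaximal R).ne_top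
      (top_le_iff.1 (h ▸ (Ideal.span_singleton_le_iff_mem _).2 ha))
  exact IsLocalRing.of_surjective' _ Ideal.Quotient.mk_surjective

lemma quot_gens {a : R} {ys : List R} (h : Ideal.ofList (a :: ys) = maximalIdeal R)
    [IsLocalRing (R ⧸ Ideal.span {a})] :
    Ideal.ofList (ys.map (Ideal.Quotient.mk (Ideal.span {a}))) =
      maximalIdeal (R ⧸ Ideal.span {a}) := by
  rw [← map_maximalIdeal_of_surjective (Ideal.Quotient.mk (Ideal.span {a}))
    Ideal.Quotient.mk_surjective, ← h, Ideal.ofList_cons, Ideal.map_sup, Ideal.map_quotient_self,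
    bot_sup_eq, Ideal.map_ofList]

lemma mem_of_gens {a : R} {xs : List R} (h : Ideal.ofList xs = maximalIdeal R) (ha : a ∈ xs) :
    a ∈ maximalIdeal R := h ▸ Ideal.subset_span ha

variable [IsNoetherianRing R]

lemma dim_le_length {xs : List R} (h : Ideal.ofList xs = maximalIdeal R) :
    ringKrullDim R ≤ (xs.length : WithBot ℕ∞) := by
  classical
  refine (ringKrullDim_le_spanFinrank_maximalIdeal R).trans ?_
  rw [← h]
  have hs : {r | r ∈ xs} = (xs.toFinset : Set R) := by ext; simp
  have h1 : (Ideal.ofList xs).spanFinrank ≤ xs.length := by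
    refine (Submodule.spanFinrank_span_le_ncard_of_finite (hs ▸ xs.toFinset.finite_toSet)).trans ?_
    rw [hs, Set.ncard_coe_finset]
    exact List.toFinset_card_le xs
  exact_mod_cast h1

/-- Killing one element of the maximal ideal lowers the dimension by at most one. -/
lemma dim_le_quot {a : R} (ha : a ∈ maximalIdeal R) :
    ringKrullDim R ≤ ringKrullDim (R ⧸ Ideal.span {a}) + 1 := by
  have h := ringKrullDim_le_ringKrullDim_quotient_add_card ({a} : Finset R) (by
    simpa [IsLocalRing.ringJacobson_eq_maximalIdeal] using ha)
  rwa [Finset.coe_singleton, Finset.card_singleton, Nat.cast_one] at h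

/-- A principal prime ideal that is not a minimal prime forces a Noetherian local ring to be a
domain. -/
lemma isDomain_of_prime {a : R} (ha : a ∈ maximalIdeal R) (hp : (Ideal.span {a}).IsPrime)
    (hm : Ideal.span {a} ∉ minimalPrimes R) : IsDomain R := by
  obtain ⟨Q, hQ, hQa⟩ := Ideal.exists_minimalPrimes_le (I := ⊥) (J := Ideal.span {a}) bot_le
  have hQp : Q.IsPrime := hQ.1.1
  have haQ : a ∉ Q := fun h => hm (by
    have : Q = Ideal.span {a} := le_antisymm hQa ((Ideal.span_singleton_le_iff_mem _).2 h)
    exact this ▸ hQ)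
  have hbot : Q = ⊥ := by
    refine Submodule.eq_bot_of_le_smul_of_le_jacobson_bot (Ideal.span {a}) Q
      (IsNoetherian.noetherian Q) ?_ ?_
    · intro y hy
      obtain ⟨w, rfl⟩ := Ideal.mem_span_singleton'.1 (hQa hy)
      rw [mul_comm]
      exact Submodule.smul_mem_smul (Ideal.mem_span_singleton_self _)
        ((hQp.mem_or_mem hy).resolve_right haQ)
    · rw [IsLocalRing.jacobson_eq_maximalIdeal _ bot_ne_top]
      exact (Ideal.span_singleton_le_iff_mem _).2 ha
  rw [hbot] at hQp
  exact IsDomain.of_bot_isPrime R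

lemma add_one_le_of_lt_natCast {w : WithBot ℕ∞} {d : ℕ} (h : w < (d : WithBot ℕ∞)) :
    w + 1 ≤ (d : WithBot ℕ∞) := by
  induction w with
  | bot => simp
  | coe w =>
    have h' : w < (d : ℕ∞) := by exact_mod_cast h
    have := Order.add_one_le_of_lt h'
    exact_mod_cast this

/-- In a regular local ring a minimal generating set of the maximal ideal is a regular sequence,
and the ring is a domain. The induction step needs a generator outside the minimal primes, which
is found among the elements `a + b ^ (k + 1)`. -/
theorem regular_local (d : ℕ) : ∀ (R : Type) [CommRing R] [IsLocalRing R] [IsNoetherianRing R],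
    ringKrullDim R = (d : WithBot ℕ∞) → ∀ xs : List R, xs.length = d →
    Ideal.ofList xs = maximalIdeal R → IsDomain R ∧ IsWeaklyRegular R xs := by
  induction d with
  | zero =>
    intro R _ _ _ _ xs hl hxs
    obtain rfl := List.length_eq_zero_iff.1 hl
    refine ⟨?_, IsWeaklyRegular.nil _ _⟩
    rw [Ideal.ofList_nil] at hxs
    have := (maximalIdeal.isMaximal R).isPrime
    rw [← hxs] at this
    exact IsDomain.of_bot_isPrime R
  | succ d ih =>
    intro R _ _ _ hd xs hl hxs
    have key : ∀ (a : R) (ys : List R), ys.length = d → Ideal.ofList (a :: ys) = maximalIdeal R →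
        IsDomain (R ⧸ Ideal.span {a}) ∧ IsWeaklyRegular (R ⧸ Ideal.span {a})
          (ys.map (Ideal.Quotient.mk (Ideal.span {a}))) := by
      intro a ys hys h
      have ha : a ∈ maximalIdeal R := mem_of_gens h List.mem_cons_self
      have := quot_local ha
      have hg := quot_gens h
      refine ih _ (le_antisymm ?_ ?_) _ (by simpa using hys) hg
      · simpa [hys] using dim_le_length hg
      · have h1 := dim_le_quot ha
        rw [hd, Nat.cast_succ] at h1
        by_contra hlt
        rw [not_le] at hlt
        have h2 : ((d + 1 : ℕ) : WithBot ℕ∞) ≤ (d : WithBot ℕ∞) := by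
          rw [Nat.cast_succ]
          exact h1.trans (add_one_le_of_lt_natCast hlt)
        have h3 : d + 1 ≤ d := by exact_mod_cast h2
        omega
    obtain ⟨a, ys, rfl⟩ : ∃ a ys, xs = a :: ys := List.exists_cons_of_length_eq_add_one hl
    have hys : ys.length = d := by simpa using hl
    have hdom : IsDomain R := by
      by_contra hnd
      have hmin : ∀ (a : R) (ys : List R), ys.length = d →
          Ideal.ofList (a :: ys) = maximalIdeal R → Ideal.span {a} ∈ minimalPrimes R := by
        intro a ys hys h
        by_contra hm
        have := (key a ys hys h).1
        exact hnd (isDomain_of_prime (mem_of_gens h List.mem_cons_self)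
          ((Ideal.Quotient.isDomain_iff_prime _).1 this) hm)
      cases ys with
      | nil =>
        have h1 := hmin a [] hys hxs
        rw [Ideal.ofList_singleton] at hxs
        rw [hxs] at h1
        have h2 : (maximalIdeal R).height = 0 := Ideal.height_eq_zero_iff.2 h1
        have h3 := IsLocalRing.maximalIdeal_height_eq_ringKrullDim (R := R)
        rw [h2, hd] at h3
        have h4 : (0 : ℕ) = d + 1 := by exact_mod_cast h3
        omega
      | cons b zs =>
        have hg : ∀ k : ℕ, Ideal.ofList ((a + b ^ (k + 1)) :: b :: zs) = maximalIdeal R := by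
          intro k
          rw [← hxs, Ideal.ofList_cons, Ideal.ofList_cons, Ideal.ofList_cons, Ideal.ofList_cons,
            ← sup_assoc, ← sup_assoc]
          congr 1
          rw [← Ideal.span_insert, ← Ideal.span_insert, pow_succ]
          exact Ideal.span_pair_add_mul_right a b (b ^ k)
        have hinf := (minimalPrimes.finite_of_isNoetherianRing R).to_subtype
        obtain ⟨k, k', hne, heq⟩ := Finite.exists_ne_map_eq_of_infinite
          (fun k : ℕ => (⟨_, hmin _ _ hys (hg k)⟩ : minimalPrimes R))
        wlog hlt : k < k' generalizing k k'
        · exact this k' k hne.symm heq.symm (lt_of_le_of_ne (not_lt.1 hlt) hne.symm)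
        have hI : Ideal.span {a + b ^ (k + 1)} = Ideal.span {a + b ^ (k' + 1)} :=
          congrArg Subtype.val heq
        have hprime : (Ideal.span {a + b ^ (k + 1)}).IsPrime := (hmin _ _ hys (hg k)).1.1
        have hbm : b ∈ maximalIdeal R := mem_of_gens hxs (by simp)
        have hb : b ∈ Ideal.span {a + b ^ (k + 1)} := by
          have h1 : b ^ (k + 1) * (1 - b ^ (k' - k)) ∈ Ideal.span {a + b ^ (k + 1)} := by
            have h2 : b ^ (k + 1) * (1 - b ^ (k' - k)) =
                (a + b ^ (k + 1)) - (a + b ^ (k' + 1)) := by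
              obtain ⟨c, rfl⟩ := Nat.exists_eq_add_of_lt hlt
              rw [show k + c + 1 - k = c + 1 by omega]
              ring
            rw [h2]
            refine Ideal.sub_mem _ (Ideal.mem_span_singleton_self _) ?_
            rw [hI]
            exact Ideal.mem_span_singleton_self _
          have hu : IsUnit (1 - b ^ (k' - k)) := by
            by_contra hu
            refine (maximalIdeal.isMaximal R).ne_top ((Ideal.eq_top_iff_one _).2 ?_)
            have h3 := Ideal.add_mem _ ((mem_maximalIdeal _).2 hu)
              (Ideal.pow_mem_of_mem _ hbm (k' - k) (by omega))
            simp at h3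
          refine hprime.mem_of_pow_mem (k + 1) ?_
          exact (hprime.mem_or_mem h1).resolve_right
            fun h => hprime.ne_top (Ideal.eq_top_of_isUnit_mem _ h hu)
        have ham := mem_of_gens (hg k) List.mem_cons_self
        have := quot_local ham
        have h4 := quot_gens (hg k)
        rw [List.map_cons, Ideal.ofList_cons, Ideal.Quotient.eq_zero_iff_mem.2 hb,
          Ideal.span_singleton_zero, bot_sup_eq] at h4
        have h5 := dim_le_length h4
        have h6 := dim_le_quot ham
        rw [hd] at h6
        have h7 : ((d + 1 : ℕ) : WithBot ℕ∞) ≤ ((zs.length + 1 : ℕ) : WithBot ℕ∞) := by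
          refine h6.trans ?_
          rw [Nat.cast_succ]
          gcongr
          simpa using h5
        have h8 : d + 1 ≤ zs.length + 1 := by exact_mod_cast h7
        simp at hys
        omega
    refine ⟨hdom, ?_⟩
    have ha0 : a ≠ 0 := by
      rintro rfl
      rw [Ideal.ofList_cons, Ideal.span_singleton_zero, bot_sup_eq] at hxs
      have h5 := dim_le_length hxs
      rw [hd, hys] at h5
      have : d + 1 ≤ d := by exact_mod_cast h5
      omega
    rw [isWeaklyRegular_cons_iff]
    refine ⟨fun u v huv => mul_left_cancel₀ ha0 huv, ?_⟩
    have h1 := (key a ys hys hxs).2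
    rw [← Ideal.Quotient.algebraMap_eq, isWeaklyRegular_map_algebraMap_iff] at h1
    refine (LinearEquiv.isWeaklyRegular_congr (Submodule.quotEquivOfEq _ _ ?_) ys).1 h1
    rw [← Submodule.ideal_span_singleton_smul]
    simp

end RegularLocal

/-! ### Flatness over a regular local ring -/

section Flat

open RingTheory.Sequence IsLocalRing TensorProduct Pointwise

/-- A local homomorphism from a local ring whose maximal ideal is generated by a regular sequence
is flat as soon as the image of this sequence is regular. -/
theorem flat_of_regular {R A : Type} [CommRing R] [CommRing A] [Algebra R A]
    [IsNoetherianRing R] [IsNoetherianRing A] [IsLocalRing R] [IsLocalRing A]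
    (hm : ∀ r ∈ maximalIdeal R, algebraMap R A r ∈ maximalIdeal A) (xs : List R)
    (hxs : Ideal.ofList xs = maximalIdeal R) (h1 : IsWeaklyRegular R xs)
    (h2 : IsWeaklyRegular A (xs.map (algebraMap R A))) : Module.Flat R A := by
  have base : TorVan R A (R ⧸ maximalIdeal R) := by
    rw [isWeaklyRegular_map_algebraMap_iff] at h2
    refine (TorVan.quot_list xs R TorVan.self h1
      (((TensorProduct.rid R A).isWeaklyRegular_congr xs).2 h2)).of_equiv
      (Submodule.quotEquivOfEq _ _ ?_)
    rw [hxs, smul_eq_mul, Ideal.mul_top]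
  have main : ∀ (I : Ideal R) (N : Type) [AddCommGroup N] [Module R N] [Module.Finite R N],
      I ≤ Module.annihilator R N → TorVan R A N := by
    intro I
    induction I using IsNoetherian.induction with
    | hgt I ih =>
    intro N _ _ hN
    induction hN using IsNoetherianRing.induction_on_isQuotientEquivQuotientPrime R with
    | subsingleton N => intro _; exact TorVan.of_subsingleton
    | quotient N p φ =>
      intro hI
      have hIp : I ≤ p.asIdeal := by
        rw [φ.annihilator_eq] at hI
        simpa [Ideal.annihilator_quotient] using hI
      by_cases hpm : p.asIdeal = maximalIdeal R
      · exact base.of_equiv ((Submodule.quotEquivOfEq _ _ hpm).symm.trans φ.symm)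
      · obtain ⟨x, hxm, hxp⟩ := SetLike.exists_of_lt
          (lt_of_le_of_ne (le_maximalIdeal p.2.ne_top) hpm)
        have hreg : IsSMulRegular N x := by
          refine (φ.isSMulRegular_congr x).2 ?_
          rw [isSMulRegular_quotient_iff_mem_of_smul_mem]
          exact fun y hy => (p.2.mem_or_mem hy).resolve_left hxp
        refine TorVan.of_quot (hm x hxm) hreg (ih (I ⊔ Ideal.span {x}) ?_ _ ?_)
        · exact left_lt_sup.2 fun h => hxp (hIp (h (Ideal.mem_span_singleton_self x)))
        · refine sup_le (hI.trans ?_) ?_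
          · exact (Submodule.mkQ _).annihilator_le_of_surjective (Submodule.mkQ_surjective _)
          · rw [Ideal.span_singleton_le_iff_mem]
            exact QuotSMulTop.mem_annihilator N x
    | exact N₁ N₂ N₃ f g hf hg hfg h₁ h₃ =>
      intro hI
      exact TorVan.of_exact f g hf hg hfg (h₁ (hI.trans (f.annihilator_le_of_injective hf)))
        (h₃ (hI.trans (g.annihilator_le_of_surjective hg)))
  rw [Module.Flat.iff_lTensor_injective']
  intro I
  refine main ⊥ (R ⧸ I) bot_le I R I.subtype I.mkQ I.injective_subtype I.mkQ_surjective ?_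
  exact LinearMap.exact_subtype_mkQ I

/-- Kunz: the Frobenius endomorphism of a regular local ring is flat. -/
theorem frobenius_flat (p : ℕ) [Fact p.Prime] (R : Type) [CommRing R] [CharP R p]
    (hR : IsRegularLocal R) (e : ℕ) : (iterateFrobenius R p e).Flat := by
  obtain ⟨hn, hl, s, hs, hd⟩ := hR
  have hgen : Ideal.ofList s.toList = maximalIdeal R := by
    rw [← hs]
    exact congrArg Ideal.span (Set.ext fun r => Finset.mem_toList)
  have h1 := (regular_local s.card R hd.symm s.toList (Finset.length_toList s) hgen).2
  let ψ := iterateFrobenius R p e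
  refine @flat_of_regular R R _ _ ψ.toAlgebra _ _ _ _ ?_ s.toList hgen h1 ?_
  · intro r hr
    change iterateFrobenius R p e r ∈ _
    rw [iterateFrobenius_def]
    exact Ideal.pow_mem_of_mem _ hr _ (pow_pos (Fact.out : p.Prime).pos e)
  · have : s.toList.map ψ = s.toList.map (· ^ (p ^ e)) :=
      List.map_congr_left fun r _ => iterateFrobenius_def p e r
    exact this ▸ weaklyRegular_pow (p ^ e) s.toList R h1

end Flat

end FrobReg

namespace FrobReg

/-! ### Exactness of Frobenius powers of a resolution -/

section Support

open Matrix

lemma matMap_eq_vecMul {S : Type} [CommRing S] {a b : ℕ} (A : Matrix (Fin a) (Fin b) S)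
    (z : Fin a → S) : matMap (fun i j => A i j) z = z ᵥ* A := by
  funext j
  change ∑ i, A i j • z i = ∑ i, z i * A i j
  exact Finset.sum_congr rfl fun i _ => mul_comm _ _

/-- Flat base change preserves exactness of a pair of matrices. -/
lemma exact_map_of_flat {S T : Type} [CommRing S] [CommRing T] (f : S →+* T) (hf : f.Flat)
    {a b c : ℕ} (A : Matrix (Fin a) (Fin b) S) (B : Matrix (Fin b) (Fin c) S)
    (h : ∀ z, z ᵥ* B = 0 ↔ ∃ w, w ᵥ* A = z) (z : Fin b → T) (hz : z ᵥ* B.map f = 0) :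
    ∃ w, w ᵥ* A.map f = z := by
  let _ : Algebra S T := f.toAlgebra
  have : Module.Flat S T := hf
  have hex : Function.Exact A.vecMulLinear B.vecMulLinear := fun z => h z
  have hex' := Module.Flat.lTensor_exact T hex
  have comm : ∀ {a b : ℕ} (A : Matrix (Fin a) (Fin b) S) (t : TensorProduct S T (Fin a → S)),
      TensorProduct.piScalarRight S S T (Fin b) (A.vecMulLinear.lTensor T t) =
        (TensorProduct.piScalarRight S S T (Fin a) t) ᵥ* A.map f := by
    intro a b A t
    induction t with
    | zero => simp
    | add x y hx hy => simp only [map_add, hx, hy, add_vecMul]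
    | tmul x y =>
      rw [LinearMap.lTensor_tmul, TensorProduct.piScalarRight_apply,
        TensorProduct.piScalarRightHom_tmul, TensorProduct.piScalarRight_apply,
        TensorProduct.piScalarRightHom_tmul]
      funext j
      simp only [vecMulLinear_apply, vecMul, dotProduct, Matrix.map_apply, Algebra.smul_def,
        map_sum, map_mul, Finset.sum_mul]
      refine Finset.sum_congr rfl fun i _ => ?_
      change f _ * f _ * _ = f _ * _ * f _
      ring
  obtain ⟨t, rfl⟩ := (TensorProduct.piScalarRight S S T (Fin b)).surjective z
  rw [← comm, LinearEquiv.map_eq_zero_iff] at hz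
  obtain ⟨w, rfl⟩ := (hex' t).1 hz
  exact ⟨_, (comm A w).symm⟩

/-- Clearing denominators in a localization. -/
lemma exists_smul_of_localization {S : Type} [CommRing S] (P : Ideal S) [P.IsPrime]
    {a b : ℕ} (A : Matrix (Fin a) (Fin b) S) (z : Fin b → S)
    (w : Fin a → Localization.AtPrime P)
    (hw : w ᵥ* A.map (algebraMap S (Localization.AtPrime P)) =
      fun i => algebraMap S (Localization.AtPrime P) (z i)) :
    ∃ s ∉ P, ∃ v, v ᵥ* A = s • z := by
  obtain ⟨⟨s, hs⟩, hsw⟩ := IsLocalization.exist_integer_multiples_of_finite P.primeCompl w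
  choose v hv using hsw
  have h1 : ∀ j, ∃ c : P.primeCompl, c * ((v ᵥ* A) j) = c * (s * z j) := by
    intro j
    refine (IsLocalization.eq_iff_exists P.primeCompl (Localization.AtPrime P)).1 ?_
    have h2 := congrFun hw j
    simp only [vecMul, dotProduct, Matrix.map_apply] at h2 ⊢
    rw [map_mul, ← h2, map_sum, Finset.mul_sum]
    refine Finset.sum_congr rfl fun i _ => ?_
    rw [map_mul, hv i, ← mul_assoc]
    congr 1
    exact Algebra.smul_def s (w i)
  choose c hc using h1
  refine ⟨(∏ j, c j : P.primeCompl) * s, ?_, ((∏ j, c j : P.primeCompl) : S) • v, ?_⟩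
  · exact P.primeCompl.mul_mem (∏ j, c j : P.primeCompl).2 hs
  · rw [smul_vecMul]
    funext j
    obtain ⟨d, hd⟩ : ∃ d : P.primeCompl, ∏ j, c j = d * c j :=
      ⟨_, (Finset.prod_erase_mul _ _ (Finset.mem_univ j)).symm⟩
    simp only [Pi.smul_apply, smul_eq_mul, hd, Submonoid.coe_mul]
    rw [mul_assoc, hc j]
    ring

variable {S : Type} [CommRing S] (p : ℕ) [Fact p.Prime] [CharP S p]

/-- At a prime with regular localization, the Frobenius power of an exact pair of matrices is
again exact. -/
lemma exists_smul_of_regular (e : ℕ) (P : Ideal S) [P.IsPrime]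
    (hP : IsRegularLocal (Localization.AtPrime P)) {a b c : ℕ} (A : Matrix (Fin a) (Fin b) S)
    (B : Matrix (Fin b) (Fin c) S) (h : ∀ z, z ᵥ* B = 0 ↔ ∃ w, w ᵥ* A = z) (z : Fin b → S)
    (hz : z ᵥ* B.map (iterateFrobenius S p e) = 0) :
    ∃ s ∉ P, ∃ v, v ᵥ* A.map (iterateFrobenius S p e) = s • z := by
  let φ := algebraMap S (Localization.AtPrime P)
  have : CharP (Localization.AtPrime P) p := by
    have h0 : ((p : ℕ) : Localization.AtPrime P) = 0 := by
      rw [← map_natCast φ, CharP.cast_eq_zero, map_zero]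
    exact (CharP.charP_iff_prime_eq_zero Fact.out).2 h0
  have hφ : φ.Flat := by
    rw [RingHom.flat_algebraMap_iff]
    exact IsLocalization.flat _ P.primeCompl
  have hcomm : ∀ r, iterateFrobenius (Localization.AtPrime P) p e (φ r) =
      φ (iterateFrobenius S p e r) := fun r => (RingHom.map_iterateFrobenius φ p r e).symm
  have hflat := hφ.comp (frobenius_flat p (Localization.AtPrime P) hP e)
  obtain ⟨w, hw⟩ := exact_map_of_flat _ hflat A B h (fun i => φ (z i)) (by
    have h1 := congrArg (fun v i => φ (v i)) hz
    funext j
    have h2 := congrFun h1 j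
    simp only [vecMul, dotProduct, Matrix.map_apply, RingHom.comp_apply, hcomm, map_sum, map_mul,
      Pi.zero_apply, map_zero] at h2 ⊢
    exact h2)
  refine exists_smul_of_localization P _ z w ?_
  rw [← hw, Matrix.map_map]
  congr 1
  ext i j
  exact (hcomm _).symm

end Support

section Resolution

open Matrix

variable {S : Type} [CommRing S] {𝒜 : ℤ → AddSubgroup S} {M : Type} [AddCommGroup M] [Module S M]
  {ℳ : ℤ → AddSubgroup M} {m0 : Set S} (F : MGFR 𝒜 ℳ m0)

/-- The `i`-th differential of the resolution, acting on row vectors. -/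
def dmat (i : ℕ) : Matrix (Fin (F.r (i + 1))) (Fin (F.r i)) S := F.mat i

lemma dmat_mul (i : ℕ) : dmat F (i + 1) * dmat F i = 0 := by
  ext a c
  rw [Matrix.mul_apply, Matrix.zero_apply, ← F.comp_eq_zero i a c]
  exact Finset.sum_congr rfl fun b _ => mul_comm _ _

lemma vecMul_dmat (i : ℕ) (z : Fin (F.r (i + 1)) → S) :
    z ᵥ* dmat F i = fun b => ∑ a, F.mat i a b * z a := by
  funext b
  rw [vecMul, dotProduct]
  exact Finset.sum_congr rfl fun a _ => mul_comm (z a) (F.mat i a b)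

lemma dmat_exact (i : ℕ) (z : Fin (F.r (i + 1)) → S) :
    z ᵥ* dmat F i = 0 ↔ ∃ w, w ᵥ* dmat F (i + 1) = z := by
  simp only [vecMul_dmat]
  exact F.exact_succ i z

/-- A matrix all of whose rows are cycles factors through the next differential. -/
lemma dmat_lift (i : ℕ) {c : ℕ} (B : Matrix (Fin c) (Fin (F.r (i + 1))) S)
    (hB : B * dmat F i = 0) : ∃ H : Matrix (Fin c) (Fin (F.r (i + 2))) S,
      H * dmat F (i + 1) = B := by
  have : ∀ a, ∃ w, w ᵥ* dmat F (i + 1) = B a := fun a =>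
    (dmat_exact F i (B a)).1 (funext fun j => congrFun (congrFun hB a) j)
  choose H hH using this
  exact ⟨H, funext fun a => hH a⟩

/-- An element annihilating `M` acts null-homotopically on the resolution. -/
lemma exists_homotopy {s : S} (hs : ∀ m : M, s • m = 0) (i : ℕ) :
    ∃ (H : Matrix (Fin (F.r i)) (Fin (F.r (i + 1))) S)
      (H' : Matrix (Fin (F.r (i + 1))) (Fin (F.r (i + 2))) S),
      H' * dmat F (i + 1) + dmat F i * H = s • (1 : Matrix _ _ S) := by
  induction i with
  | zero =>
    have h0 : ∀ a, ∃ w, w ᵥ* dmat F 0 = (s • (1 : Matrix (Fin (F.r 0)) (Fin (F.r 0)) S)) a := by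
      intro a
      simp only [vecMul_dmat]
      refine (F.exact_zero _).1 ?_
      simp only [Matrix.smul_apply, smul_assoc, ← Finset.smul_sum]
      exact hs _
    obtain ⟨H, hH⟩ : ∃ H : Matrix (Fin (F.r 0)) (Fin (F.r 1)) S, H * dmat F 0 = s • 1 := by
      choose H hH using h0
      exact ⟨H, funext fun a => hH a⟩
    obtain ⟨H', h'⟩ := dmat_lift F 0 (s • 1 - dmat F 0 * H) (by
      rw [Matrix.sub_mul, Matrix.mul_assoc, hH]
      simp)
    exact ⟨H, H', by rw [h']; abel⟩
  | succ i ih =>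
    obtain ⟨H, H', h⟩ := ih
    obtain ⟨H'', h''⟩ := dmat_lift F (i + 1) (s • 1 - dmat F (i + 1) * H') (by
      rw [Matrix.sub_mul, Matrix.mul_assoc, eq_sub_of_add_eq h, Matrix.mul_sub,
        ← Matrix.mul_assoc, dmat_mul]
      simp)
    exact ⟨H', H'', by rw [h'']; abel⟩

variable (p : ℕ) [Fact p.Prime] [CharP S p]

/-- Away from the support of `M`, the Frobenius power of the resolution is exact. -/
lemma exists_smul_of_annihilator (e : ℕ) {s : S} (hs : ∀ m : M, s • m = 0) (i : ℕ)
    (z : Fin (F.r (i + 1)) → S) (hz : z ᵥ* (dmat F i).map (iterateFrobenius S p e) = 0) :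
    ∃ v, v ᵥ* (dmat F (i + 1)).map (iterateFrobenius S p e) = s ^ p ^ e • z := by
  obtain ⟨H, H', h⟩ := exists_homotopy F hs i
  have h1 := congrArg (fun A => A.map (iterateFrobenius S p e)) h
  simp only [Matrix.map_add _ (map_add (iterateFrobenius S p e)), Matrix.map_mul] at h1
  refine ⟨z ᵥ* H'.map (iterateFrobenius S p e), ?_⟩
  have h2 := congrArg (fun A => z ᵥ* A) h1
  simp only [vecMul_add, ← vecMul_vecMul, hz, zero_vecMul, add_zero] at h2
  rw [h2]
  have : (s • (1 : Matrix (Fin (F.r (i + 1))) (Fin (F.r (i + 1))) S)).map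
      (iterateFrobenius S p e) = s ^ p ^ e • 1 := by
    ext a b
    simp only [Matrix.map_apply, Matrix.smul_apply, smul_eq_mul, map_mul, iterateFrobenius_def,
      Matrix.one_apply]
    split_ifs
    · simp
    · simp [(Fact.out : p.Prime).ne_zero]
  rw [this, vecMul_smul, vecMul_one]

/-- Outside the singular locus of the support of `M`, the homology of the Frobenius power of the
resolution vanishes. -/
theorem exists_smul_mem [Module.Finite S M] (e : ℕ) (P : PrimeSpectrum S)
    (hP : P ∈ Module.support S M → IsRegularLocal (Localization.AtPrime P.asIdeal)) (i : ℕ)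
    (z : Fin (F.r (i + 1)) → S) (hz : z ᵥ* (dmat F i).map (iterateFrobenius S p e) = 0) :
    ∃ s ∉ P.asIdeal, ∃ v, v ᵥ* (dmat F (i + 1)).map (iterateFrobenius S p e) = s • z := by
  by_cases h : P ∈ Module.support S M
  · exact exists_smul_of_regular p e P.asIdeal (hP h) _ _ (dmat_exact F i) z hz
  · rw [Module.mem_support_iff_of_finite] at h
    obtain ⟨s, hs, hsP⟩ := SetLike.not_le_iff_exists.1 h
    exact ⟨s ^ p ^ e, fun h' => hsP (P.2.mem_of_pow_mem _ h'),
      exists_smul_of_annihilator F p e (Module.mem_annihilator.1 hs) i z hz⟩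

end Resolution

end FrobReg

namespace FrobReg

/-! ### Dimension shifting along the Frobenius power of the resolution -/

section Assembly

variable {S : Type} [CommRing S] {𝒜 : ℤ → AddSubgroup S} {n : ℕ}

/-- The grading on `⊕ₐ S(-δ a)`. -/
def freeGr (𝒜 : ℤ → AddSubgroup S) {r : ℕ} (δ : Fin r → ℤ) (j : ℤ) : AddSubgroup (Fin r → S) :=
  AddSubgroup.pi Set.univ (fun a => 𝒜 (j - δ a))

/-- The projections onto the homogeneous components of `⊕ₐ S(-δ a)`. -/
def freeProj (π : ℤ → S →+ S) {r : ℕ} (δ : Fin r → ℤ) (j : ℤ) : (Fin r → S) →+ (Fin r → S) where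
  toFun z a := π (j - δ a) (z a)
  map_zero' := funext fun _ => map_zero _
  map_add' _ _ := funext fun _ => map_add _ _ _

lemma freeProj_gproj {π : ℤ → S →+ S} (hπ : GProj 𝒜 𝒜 π) {r : ℕ} (δ : Fin r → ℤ) :
    GProj 𝒜 (freeGr 𝒜 δ) (freeProj π δ) where
  mem j m a _ := hπ.mem _ _
  of_mem {j m} hm := funext fun a => hπ.of_mem (hm a (Set.mem_univ a))
  smul {i j s m} hs := funext fun a => by
    change π (i + j - δ a) (s • m a) = s • π (j - δ a) (m a)
    rw [← hπ.smul hs, add_sub_assoc]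

lemma matMap_freeProj {π : ℤ → S →+ S} (hπ : GProj 𝒜 𝒜 π) {r r' : ℕ} {δ : Fin r → ℤ}
    {δ' : Fin r' → ℤ} {m : Fin r' → Fin r → S} (hm : ∀ a b, m a b ∈ 𝒜 (δ' a - δ b)) (j : ℤ)
    (z : Fin r' → S) : matMap m (freeProj π δ' j z) = freeProj π δ j (matMap m z) := by
  funext b
  change ∑ a, m a b • π (j - δ' a) (z a) = π (j - δ b) (∑ a, m a b • z a)
  rw [map_sum]
  refine Finset.sum_congr rfl fun a _ => ?_
  rw [← hπ.smul (hm a b)]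
  congr 2
  ring

variable {B B' B'' : Type} [AddCommGroup B] [Module S B] [AddCommGroup B'] [Module S B']
  [AddCommGroup B''] [Module S B'']
  {ℬ : ℤ → AddSubgroup B} {ℬ' : ℤ → AddSubgroup B'} {ℬ'' : ℤ → AddSubgroup B''}

lemma exists_proj_quot {π : ℤ → B →+ B} (hπ : GProj 𝒜 ℬ π) (N : Submodule S B)
    (hN : ∀ j, ∀ b ∈ N, π j b ∈ N) :
    ∃ πC : ℤ → (B ⧸ N) →+ (B ⧸ N), GProj 𝒜 (qmPiece N ℬ) πC ∧
      ∀ j b, N.mkQ (π j b) = πC j (N.mkQ b) := by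
  let πC : ℤ → (B ⧸ N) →+ (B ⧸ N) := fun j =>
    QuotientAddGroup.map N.toAddSubgroup N.toAddSubgroup (π j) (fun b hb => hN j b hb)
  have h : ∀ j b, N.mkQ (π j b) = πC j (N.mkQ b) := fun j b => rfl
  refine ⟨πC, ⟨fun j m => ?_, fun {j m} hm => ?_, fun {i j s m} hs => ?_⟩, h⟩
  · obtain ⟨m, rfl⟩ := N.mkQ_surjective m
    exact ⟨π j m, hπ.mem j m, h j m⟩
  · obtain ⟨m, hm, rfl⟩ := hm
    change πC j (N.mkQ m) = N.mkQ m
    rw [← h, hπ.of_mem hm]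
  · obtain ⟨m, rfl⟩ := N.mkQ_surjective m
    rw [← map_smul, ← h, ← h, hπ.smul hs, map_smul]

lemma exists_proj_sub {π : ℤ → B →+ B} (hπ : GProj 𝒜 ℬ π) (N : Submodule S B)
    (hN : ∀ j, ∀ b ∈ N, π j b ∈ N) :
    ∃ πK : ℤ → N →+ N, GProj 𝒜 (fun j => (ℬ j).comap N.subtype.toAddMonoidHom) πK ∧
      ∀ j b, (πK j b : B) = π j b := by
  let πK : ℤ → N →+ N := fun j =>
    ((π j).comp N.subtype.toAddMonoidHom).codRestrict N.toAddSubgroup (fun b => hN j b b.2)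
  have h : ∀ j b, (πK j b : B) = π j b := fun j b => rfl
  refine ⟨πK, ⟨fun j m => ?_, fun {j m} hm => ?_, fun {i j s m} hs => ?_⟩, h⟩
  · exact hπ.mem j _
  · exact Subtype.ext (hπ.of_mem hm)
  · exact Subtype.ext (hπ.smul hs)

/-- One step of dimension shifting: for a graded complex `B'' → B' → B` whose homology at `B'` is
supported in dimension at most one, a nonzero class in the local cohomology of `coker (B' → B)`
comes from `B`, or gives one of the next cohomological degree on `coker (B'' → B')`. -/
theorem lcNZ_step [IsNoetherianRing S] [Module.Finite S B'] (hS : IsStdGraded 𝒜) {x : Fin n → S}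
    (hx : ∀ l (t : ℕ), x l ^ t ∈ 𝒜 t) {π : ℤ → B →+ B} {π' : ℤ → B' →+ B'} {π'' : ℤ → B'' →+ B''}
    (h : GProj 𝒜 ℬ π) (h' : GProj 𝒜 ℬ' π')
    (D : B' →ₗ[S] B) (D' : B'' →ₗ[S] B') (hD : ∀ j b, D (π' j b) = π j (D b))
    (hD' : ∀ j b, D' (π'' j b) = π' j (D' b)) (hDD : ∀ b, D (D' b) = 0)
    (hH : ∀ P : PrimeSpectrum S,
      ¬ ringKrullDim (S ⧸ P.asIdeal) < ((2 : ℕ) : WithBot (WithTop ℕ)) →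
      ∀ z, D z = 0 → ∃ s ∉ P.asIdeal, ∃ v, D' v = s • z) {q : ℕ} {j : ℤ}
    (hnz : lcNZ x (qmPiece (LinearMap.range D) ℬ) q j) :
    lcNZ x ℬ q j ∨ lcNZ x (qmPiece (LinearMap.range D') ℬ') (q + 1) j := by
  have hr : ∀ j, ∀ b ∈ LinearMap.range D, π j b ∈ LinearMap.range D := by
    rintro j _ ⟨b, rfl⟩
    exact ⟨π' j b, hD j b⟩
  have hr' : ∀ j, ∀ b ∈ LinearMap.range D', π' j b ∈ LinearMap.range D' := by
    rintro j _ ⟨b, rfl⟩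
    exact ⟨π'' j b, hD' j b⟩
  obtain ⟨πC, hC, hCc⟩ := exists_proj_quot h (LinearMap.range D) hr
  obtain ⟨πC', hC', hCc'⟩ := exists_proj_quot h' (LinearMap.range D') hr'
  refine (lcNZ_of_surjective hS hx h hC (LinearMap.range D).mkQ (Submodule.mkQ_surjective _)
    hCc hnz).imp_right fun h1 => ?_
  have hker : LinearMap.ker (LinearMap.range D).mkQ = LinearMap.range D := Submodule.ker_mkQ _
  obtain ⟨πK, hK, hKc⟩ := exists_proj_sub h (LinearMap.ker (LinearMap.range D).mkQ)
    (hker.symm ▸ hr)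
  let g : (B' ⧸ LinearMap.range D') →ₗ[S] LinearMap.ker (LinearMap.range D).mkQ :=
    (LinearMap.range D').liftQ
      (D.codRestrict _ fun b => by rw [hker]; exact LinearMap.mem_range_self D b) (by
        rintro _ ⟨b, rfl⟩
        exact Subtype.ext (hDD b))
  have hg : ∀ b, (g ((LinearMap.range D').mkQ b) : B) = D b := fun b => rfl
  have hgs : Function.Surjective g := by
    rintro ⟨b, hb⟩
    rw [hker] at hb
    obtain ⟨b, rfl⟩ := hb
    exact ⟨(LinearMap.range D').mkQ b, rfl⟩
  refine (lcNZ_of_surjective hS hx hC' hK g hgs (fun j b => ?_) h1).resolve_right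
    (not_lcNZ_of_KV ?_)
  · obtain ⟨b, rfl⟩ := (LinearMap.range D').mkQ_surjective b
    refine Subtype.ext ?_
    rw [← hCc', hKc, hg, hg, hD]
  · refine KV.of_dim x 2 _ (by omega) _ fun P hP => ?_
    by_contra hdim
    obtain ⟨⟨m, hm⟩, hmP⟩ := Module.mem_support_iff'.1 hP
    obtain ⟨z, rfl⟩ := (LinearMap.range D').mkQ_surjective m
    obtain ⟨s, hs, v, hv⟩ := hH P hdim z (congrArg Subtype.val hm)
    refine hmP s hs (Subtype.ext ?_)
    change s • (LinearMap.range D').mkQ z = 0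
    rw [← map_smul, ← hv]
    exact (Submodule.Quotient.mk_eq_zero _).2 ⟨v, rfl⟩

/-- Iterated dimension shifting; it stops because local cohomology vanishes above `dim S`. -/
theorem exists_lcNZ_free [IsNoetherianRing S] (hS : IsStdGraded 𝒜) {x : Fin n → S}
    (hx : ∀ l (t : ℕ), x l ^ t ∈ 𝒜 t) (dS : ℕ)
    (hdS : ringKrullDim S = (dS : WithBot (WithTop ℕ))) (r : ℕ → ℕ) (δ : ∀ i, Fin (r i) → ℤ)
    (m : ∀ i, Fin (r (i + 1)) → Fin (r i) → S) (hm : ∀ i a b, m i a b ∈ 𝒜 (δ (i + 1) a - δ i b))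
    (hmm : ∀ i z, matMap (m i) (matMap (m (i + 1)) z) = 0)
    (hH : ∀ i (P : PrimeSpectrum S),
      ¬ ringKrullDim (S ⧸ P.asIdeal) < ((2 : ℕ) : WithBot (WithTop ℕ)) →
      ∀ z, matMap (m i) z = 0 → ∃ s ∉ P.asIdeal, ∃ v, matMap (m (i + 1)) v = s • z)
    (q : ℕ) (j : ℤ)
    (hnz : lcNZ x (qmPiece (LinearMap.range (matMap (m 0))) (freeGr 𝒜 (δ 0))) q j) :
    ∃ i, q + i ≤ dS ∧ ∃ a, lcNZ x 𝒜 (q + i) (j - δ i a) := by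
  have hKV : ∀ (i : ℕ) (N : Type) [AddCommGroup N] [Module S N] [Module.Finite S N],
      dS < i → KV x N i := by
    intro i N _ _ _ hi
    refine KV.of_dim x (dS + 1) i hi N fun P _ => ?_
    refine lt_of_le_of_lt ((ringKrullDim_quotient_le P.asIdeal).trans hdS.le) ?_
    exact WithBot.coe_lt_coe.2 (WithTop.coe_lt_coe.2 (Nat.lt_succ_self dS))
  obtain ⟨π, hπ⟩ := exists_proj hS
  have key : ∀ (c i : ℕ), dS < q + i + c →
      lcNZ x (qmPiece (LinearMap.range (matMap (m i))) (freeGr 𝒜 (δ i))) (q + i) j →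
      ∃ i, lcNZ x (freeGr 𝒜 (δ i)) (q + i) j := by
    intro c
    induction c with
    | zero => exact fun i hi h => absurd h (not_lcNZ_of_KV (hKV _ _ hi))
    | succ c ih =>
      intro i hi h
      rcases lcNZ_step hS hx (freeProj_gproj hπ (δ i)) (freeProj_gproj hπ (δ (i + 1)))
        (matMap (m i)) (matMap (m (i + 1))) (matMap_freeProj hπ (hm i))
        (matMap_freeProj hπ (hm (i + 1))) (hmm i) (hH i) h with h1 | h1
      · exact ⟨i, h1⟩
      · exact ih (i + 1) (by omega) h1
  obtain ⟨i, hi⟩ := key (dS + 1) 0 (by omega) hnz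
  refine ⟨i, ?_, lcNZ_pi hi⟩
  by_contra hlt
  exact not_lcNZ_of_KV (hKV _ _ (not_le.1 hlt)) hi

end Assembly

end FrobReg

/-- **Regularity of Frobenius powers** (Theorem 4.2).  Let `S` be a standard graded ring over
a field `k` of characteristic `p > 0` and `M` a finitely generated graded `S`-module with
minimal graded free resolution `F_•`, such that `dim(Sing(S) ∩ Supp(M)) ≤ 1`.  The `e`-th
Frobenius power `𝓕ᵉM` is presented by the matrix of `F_1 → F_0` with all entries raised to
the power `p^e`, with the grading scaled by `p^e` on the generators.  Then
`reg(𝓕ᵉM) ≤ reg(S) + max_{0 ≤ i ≤ dim S} (p^e · b_i^S(M) − i)`, stated elementwise via the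
nonvanishing predicate `lcNZ` for graded local cohomology. -/
theorem reg_frobenius_power_le (p : ℕ) [Fact p.Prime]
    (S : Type) [CommRing S] [IsNoetherianRing S] [CharP S p]
    (𝒜 : ℤ → AddSubgroup S) (hSG : IsStdGraded 𝒜)
    (k : Type) [Field k] [CharP k p] [Algebra k S] (hover : GradedOver 𝒜 k)
    {n : ℕ} (x : Fin n → S) (hx : GensDegOne 𝒜 x)
    (M : Type) [AddCommGroup M] [Module S M] [Module.Finite S M]
    (ℳ : ℤ → AddSubgroup M) (hgm : IsGradedMod 𝒜 ℳ)
    (F : MGFR 𝒜 ℳ ({0} : Set S))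
    (hsing : ∀ P : PrimeSpectrum S, P ∈ Module.support S M →
      ¬ IsRegularLocal (Localization.AtPrime P.asIdeal) →
      ringKrullDim (S ⧸ P.asIdeal) ≤ 1)
    (dS : ℕ) (hdS : ringKrullDim S = (dS : WithBot (WithTop ℕ)))
    (e : ℕ) :
    ∀ (q : ℕ) (j : ℤ),
      lcNZ x
        (qmPiece
          (LinearMap.range (matMap (fun a b => (F.mat 0 a b) ^ (p ^ e))))
          (fun j' => AddSubgroup.pi Set.univ
            (fun a : Fin (F.r 0) => 𝒜 (j' - (p ^ e : ℕ) * F.deg 0 a))))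
        q j →
      ∃ (q' : ℕ) (j' : ℤ), lcNZ x 𝒜 q' j' ∧
        ∃ (i : ℕ) (a : Fin (F.r i)), i ≤ dS ∧
          (j : ℤ) + q ≤ (j' + q') + ((p ^ e : ℕ) * F.deg i a - i) := by
  intro q j hnz
  have hx' : ∀ l (t : ℕ), x l ^ t ∈ 𝒜 t := fun l t => by
    simpa using FrobReg.IsStdGraded.pow_mem hSG (hx.1 l) t
  have hmap : ∀ i (z : Fin (F.r (i + 1)) → S), matMap (fun a b => F.mat i a b ^ p ^ e) z =
      Matrix.vecMul z ((FrobReg.dmat F i).map (iterateFrobenius S p e)) := by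
    intro i z
    rw [← FrobReg.matMap_eq_vecMul]
    simp only [Matrix.map_apply, iterateFrobenius_def]
    rfl
  have key : ∃ i, q + i ≤ dS ∧ ∃ a : Fin (F.r i),
      lcNZ x 𝒜 (q + i) (j - ((p ^ e : ℕ) : ℤ) * F.deg i a) := by
    refine FrobReg.exists_lcNZ_free hSG hx' dS hdS F.r
      (fun i a => ((p ^ e : ℕ) : ℤ) * F.deg i a) (fun i a b => F.mat i a b ^ p ^ e)
      (fun i a b => ?_) (fun i z => ?_) (fun i P hP z hz => ?_) q j hnz
    · rw [← mul_sub]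
      exact FrobReg.IsStdGraded.pow_mem hSG (F.mat_mem i a b) (p ^ e)
    · rw [hmap, hmap, Matrix.vecMul_vecMul, ← Matrix.map_mul, FrobReg.dmat_mul,
        Matrix.map_zero _ (map_zero _), Matrix.vecMul_zero]
    · simp only [hmap] at hz ⊢
      refine FrobReg.exists_smul_mem F p e P (fun hsupp => ?_) i z hz
      by_contra hreg
      refine hP ((hsing P hsupp hreg).trans_lt ?_)
      exact WithBot.coe_lt_coe.2 (WithTop.coe_lt_coe.2 Nat.one_lt_two)
  obtain ⟨i, hi, a, ha⟩ := key
  exact ⟨q + i, _, ha, i, a, by omega, by push_cast; linarith⟩
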